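/- arXiv:2605.20841 — 2 statements merged into one kernel-verified Lean document; each statement's English description precedes it below -/
import Mathlib

section
/- Let g : ℕ → ℕ be a computably e-independent total function, let n > 0, and let x₁,…,x_k ⊆ {1,…,n}. Then there exist a downwards ≤_e-closed set 𝒜 of partial functions and total functions f₁,…,f_n ∈ 𝒜 with f_i ⊕ f_j ∉ 𝒜 for all i ≠ j (a strong upwards antichain in 𝒜), such that (𝒜ᶜ ∪ {ψ : ∃i ∈ {1,…,n}, f_i ≤_e ψ}) ⊕ {i⌢φ : i ∈ ℕ, g^{[i]} ≤_e φ} ≡_D ⋀_{j=1}^{k} (𝒜ᶜ ∪ {ψ : ∃i ∈ x_j, f_i ≤_e ψ}), where 𝒜ᶜ is the complement of 𝒜 within all partial functions and ⋀_{j=1}^{k} C_j = ⋃_{j=1}^{k} j⌢C_j. -/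
/-!
Take `𝒜` to be the set of partial functions that do not enumerate `g`.  For `i < n` let `Iᵢ` be the
set of indices `j` with `i ∈ xⱼ`.  It suffices to find total functions `fᵢ` such that `fᵢ` computes
the columns of `g` with index in `Iᵢ`, does not compute `g`, and computes `g` together with any
column whose index is outside `Iᵢ`, as well as together with any other `fⱼ`.

Indeed, `j⌢ψ ↦ ψ ⊕ (j⌢ψ)` then is a reduction in one direction, because `fᵢ ≤ₑ ψ` with `i ∈ xⱼ` gives
`g^{[j]} ≤ₑ ψ`.  In the other direction use `φ ⊕ (m⌢θ) ↦ m⌢(φ ⊕ θ)`, with `m` replaced by `1` when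
`m` is not in `{1, …, k}`: if `fᵢ ≤ₑ φ` and `i ∉ xₘ`, then `g ≤ₑ fᵢ ⊕ g^{[m]} ≤ₑ φ ⊕ θ`, so that
`φ ⊕ θ` is outside `𝒜`.

The `fᵢ` are obtained one after the other (`exists_antichain`) from `exists_joining`: given a total
`γ` and total functions `a₀, a₁, …` not below `γ`, there is a total `f` above `γ` which is not above
`a₀` but joins each `aₘ` above a prescribed set `C`.  This has two ingredients.

* `join_step`: if `P ≰ₑ G`, there is a total `F` with `C ≤ₑ F ⊕ P` such that total functions
  `B₀, B₁, …` not below `G` are not below `G ⊕ F` either.  The arguments of `F` are finite lists, and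
  `C` is coded by the values at lists of elements of `P`.  Inequalities are forced by `join_force`:
  if no finite extension that respects the coding does it, then the set of those `v` for which
  contradictory outputs appear above the argument `v :: σ` is contained in `P` and enumerable from
  `G`.  So it misses some `v ∈ P`, and above that `v :: σ` a correct computation of `B` could be
  carried out from `G` alone.
* `upper_bound`: the functions obtained by iterating `join_step` have a total upper bound not above
  `a₀`, by the usual column construction in which column `s` is a finite modification of the `s`-th
  function.

Both constructions are instances of `fusion`.  Enumeration reductions are produced by closure
properties of the class `EF` of predicates.
-/

def Dset (u : ℕ) : Set ℕ := {i | Nat.testBit u i}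

def enumOp (W A : Set ℕ) : Set ℕ := {x | ∃ u, Nat.pair x u ∈ W ∧ Dset u ⊆ A}

def CE (W : Set ℕ) : Prop := ∃ f : ℕ →. ℕ, Partrec f ∧ W = f.Dom

def EnumRed (A B : Set ℕ) : Prop := ∃ W, CE W ∧ A = enumOp W B

def EnumEq (A B : Set ℕ) : Prop := EnumRed A B ∧ EnumRed B A

def WeStd (e : ℕ) : Set ℕ := {x | ((Denumerable.ofNat Nat.Partrec.Code e).eval x).Dom}

def PhiStd (e : ℕ) : Set ℕ → Set ℕ := enumOp (WeStd e)

def pgraph (φ : ℕ →. ℕ) : Set ℕ := {n | n.unpair.2 ∈ φ n.unpair.1}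

def peRed (φ ψ : ℕ →. ℕ) : Prop := EnumRed (pgraph φ) (pgraph ψ)

def pfAdd (φ ψ : ℕ →. ℕ) : ℕ →. ℕ := fun n => if n % 2 = 0 then φ (n / 2) else ψ (n / 2)

def pfCons (i : ℕ) (φ : ℕ →. ℕ) : ℕ →. ℕ := fun n => if n = 0 then Part.some i else φ (n - 1)

abbrev MassPb := Set (ℕ →. ℕ)

def mpPlus (A B : MassPb) : MassPb := {h | ∃ φ ∈ A, ∃ ψ ∈ B, h = pfAdd φ ψ}

def mpCons (i : ℕ) (A : MassPb) : MassPb := pfCons i '' A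

def mpWedge (A B : MassPb) : MassPb := mpCons 0 A ∪ mpCons 1 B

def mpArrow (A B : MassPb) : MassPb :=
  {h | ∃ e φ, h = pfCons e φ ∧ ∀ ψ ∈ A, ∃ χ ∈ B, pgraph χ = PhiStd e (pgraph (pfAdd φ ψ))}

def DRed (A B : MassPb) : Prop :=
  ∃ W, CE W ∧ ∀ ψ ∈ B, ∃ χ ∈ A, pgraph χ = enumOp W (pgraph ψ)

def DEq (A B : MassPb) : Prop := DRed A B ∧ DRed B A

def DwRed (A B : MassPb) : Prop := ∀ ψ ∈ B, ∃ φ ∈ A, peRed φ ψ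

def DwEq (A B : MassPb) : Prop := DwRed A B ∧ DwRed B A

def UpClosedE (A : MassPb) : Prop := ∀ φ ψ, φ ∈ A → peRed φ ψ → ψ ∈ A

def DMProblem (A : MassPb) : Prop := A.Nonempty ∧ UpClosedE A

def PartCompFn (φ : ℕ →. ℕ) : Prop := CE (pgraph φ)

def oplus (A B : Set ℕ) : Set ℕ := (fun x => 2*x) '' A ∪ (fun x => 2*x+1) '' B

/-- The graph of a total function, as a set of codes of pairs. -/
def tgraph (f : ℕ → ℕ) : Set ℕ := {n | f n.unpair.1 = n.unpair.2}

/-- Enumeration reducibility between total functions. -/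
def teRed (f g : ℕ → ℕ) : Prop := EnumRed (tgraph f) (tgraph g)

/-- The `i`-th column of a total function: `g^{[i]}(x) = g⟨i,x⟩`. -/
def col (g : ℕ → ℕ) (i : ℕ) : ℕ → ℕ := fun x => g (Nat.pair i x)

open Classical in
/-- `⊕_{j∈I} g^{[j]}`: the total function agreeing with `g` on columns in `I`
and constantly `0` on the other columns. -/
noncomputable def restrCols (g : ℕ → ℕ) (I : Set ℕ) : ℕ → ℕ :=
  fun n => if n.unpair.1 ∈ I then g n else 0

/-- `g` is computably e-independent if no column is enumeration reducible to
the join of the remaining columns. -/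
def CompIndep (g : ℕ → ℕ) : Prop :=
  ∀ i, ¬ teRed (col g i) (restrCols g {j | j ≠ i})

/-- The indexed meet `⋀_{j=1}^{k} C_j = ⋃_{j=1}^{k} j⌢C_j`. -/
def bigWedgeU (k : ℕ) (C : Fin k → MassPb) : MassPb :=
  ⋃ j : Fin k, mpCons (j.val + 1) (C j)


/-! ### Enumeration operators as a class of predicates -/

/-- `EF X p`: the family of predicates `p i` is obtained from the family of oracles `X i` by one
enumeration operator, uniformly in `i`.  A witness `w` for `p i a` is checked primitive recursively,
and it asks a primitive recursive finite list of positive questions to the oracle.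
With `ι = Unit` this is plain enumeration reducibility; with `ι` a mass problem it is the
uniformity required by `DRed`. -/
def EF {ι α : Type} [Primcodable α] (X : ι → Set ℕ) (p : ι → α → Prop) : Prop :=
  ∃ (R : α × ℕ → Prop) (u : α × ℕ → List ℕ), PrimrecPred R ∧ Primrec u ∧
    ∀ i a, p i a ↔ ∃ w, R (a, w) ∧ ∀ b ∈ u (a, w), b ∈ X i

namespace EF

variable {ι α β : Type} [Primcodable α] [Primcodable β] {X : ι → Set ℕ}

theorem of_iff {p q : ι → α → Prop} (hp : EF X p) (h : ∀ i a, q i a ↔ p i a) : EF X q := by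
  obtain ⟨R, u, hR, hu, H⟩ := hp
  exact ⟨R, u, hR, hu, fun i a => (h i a).trans (H i a)⟩

theorem prim {p : α → Prop} (hp : PrimrecPred p) : EF X (fun _ a => p a) :=
  ⟨fun a => p a.1, fun _ => [], hp.comp Primrec.fst, Primrec.const _, fun i a => by simp⟩

theorem mem {f : α → ℕ} (hf : Primrec f) : EF X (fun i a => f a ∈ X i) :=
  ⟨fun _ => True, fun a => [f a.1], ⟨fun _ => isTrue trivial, Primrec.const true⟩,
    Primrec.list_cons.comp (hf.comp Primrec.fst) (Primrec.const _), fun i a => by simp⟩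

theorem comp {p : ι → β → Prop} (hp : EF X p) {f : α → β} (hf : Primrec f) :
    EF X (fun i a => p i (f a)) := by
  obtain ⟨R, u, hR, hu, H⟩ := hp
  have h : Primrec fun a : α × ℕ => (f a.1, a.2) := (hf.comp Primrec.fst).pair Primrec.snd
  exact ⟨fun a => R (f a.1, a.2), fun a => u (f a.1, a.2), hR.comp h, hu.comp h,
    fun i a => H i (f a)⟩

theorem and {p q : ι → α → Prop} (hp : EF X p) (hq : EF X q) : EF X (fun i a => p i a ∧ q i a) := by
  obtain ⟨R, u, hR, hu, H⟩ := hp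
  obtain ⟨S, v, hS, hv, K⟩ := hq
  have h1 : Primrec fun a : α × ℕ => (a.1, a.2.unpair.1) :=
    Primrec.fst.pair (Primrec.fst.comp (Primrec.unpair.comp Primrec.snd))
  have h2 : Primrec fun a : α × ℕ => (a.1, a.2.unpair.2) :=
    Primrec.fst.pair (Primrec.snd.comp (Primrec.unpair.comp Primrec.snd))
  refine ⟨fun a => R (a.1, a.2.unpair.1) ∧ S (a.1, a.2.unpair.2),
    fun a => u (a.1, a.2.unpair.1) ++ v (a.1, a.2.unpair.2), (hR.comp h1).and (hS.comp h2),
    Primrec.list_append.comp (hu.comp h1) (hv.comp h2), fun i a => ?_⟩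
  refine (and_congr (H i a) (K i a)).trans ?_
  constructor
  · rintro ⟨⟨w, hw, hw'⟩, ⟨z, hz, hz'⟩⟩
    refine ⟨Nat.pair w z, ?_⟩
    simp only [Nat.unpair_pair, List.mem_append]
    exact ⟨⟨hw, hz⟩, fun b hb => hb.elim (hw' b) (hz' b)⟩
  · rintro ⟨w, ⟨h1, h2⟩, h3⟩
    simp only [List.mem_append] at h3
    exact ⟨⟨_, h1, fun b hb => h3 b (Or.inl hb)⟩, ⟨_, h2, fun b hb => h3 b (Or.inr hb)⟩⟩

theorem ex {γ : Type} [Denumerable γ] {p : ι → α × γ → Prop} (hp : EF X p) :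
    EF X (fun i a => ∃ b, p i (a, b)) := by
  obtain ⟨R, u, hR, hu, H⟩ := hp
  have h1 : Primrec fun a : α × ℕ => ((a.1, Denumerable.ofNat γ a.2.unpair.1), a.2.unpair.2) :=
    (Primrec.fst.pair ((Primrec.ofNat γ).comp
      (Primrec.fst.comp (Primrec.unpair.comp Primrec.snd)))).pair
      (Primrec.snd.comp (Primrec.unpair.comp Primrec.snd))
  refine ⟨_, _, hR.comp h1, hu.comp h1, fun i a => ?_⟩
  constructor
  · rintro ⟨b, hb⟩
    obtain ⟨w, h⟩ := (H i _).1 hb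
    refine ⟨Nat.pair (Encodable.encode b) w, ?_⟩
    simpa using h
  · rintro ⟨w, h⟩
    exact ⟨_, (H i _).2 ⟨_, h⟩⟩

theorem exNat {p : ι → α × ℕ → Prop} (hp : EF X p) : EF X (fun i a => ∃ b, p i (a, b)) :=
  ex hp

theorem exList {p : ι → α × List ℕ → Prop} (hp : EF X p) : EF X (fun i a => ∃ b, p i (a, b)) :=
  ex hp

theorem or {p q : ι → α → Prop} (hp : EF X p) (hq : EF X q) : EF X (fun i a => p i a ∨ q i a) := by
  obtain ⟨R, u, hR, hu, H⟩ := hp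
  obtain ⟨S, v, hS, hv, K⟩ := hq
  have h2 : Primrec fun a : α × ℕ => (a.1, a.2.unpair.2) :=
    Primrec.fst.pair (Primrec.snd.comp (Primrec.unpair.comp Primrec.snd))
  have h0 : PrimrecPred fun a : α × ℕ => a.2.unpair.1 = 0 :=
    Primrec.eq.comp (Primrec.fst.comp (Primrec.unpair.comp Primrec.snd)) (Primrec.const 0)
  refine ⟨fun a => (a.2.unpair.1 = 0 ∧ R (a.1, a.2.unpair.2)) ∨
      (¬ a.2.unpair.1 = 0 ∧ S (a.1, a.2.unpair.2)),
    fun a => if a.2.unpair.1 = 0 then u (a.1, a.2.unpair.2) else v (a.1, a.2.unpair.2),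
    (h0.and (hR.comp h2)).or (h0.not.and (hS.comp h2)),
    Primrec.ite h0 (hu.comp h2) (hv.comp h2), fun i a => ?_⟩
  refine (or_congr (H i a) (K i a)).trans ?_
  constructor
  · rintro (⟨w, hw⟩ | ⟨w, hw⟩)
    · exact ⟨Nat.pair 0 w, by simpa using hw⟩
    · exact ⟨Nat.pair 1 w, by simpa using hw⟩
  · rintro ⟨w, h⟩
    by_cases hw : w.unpair.1 = 0
    · left
      exact ⟨w.unpair.2, by simpa [hw] using h⟩
    · right
      exact ⟨w.unpair.2, by simpa [hw] using h⟩

/-- Bounded universal quantification over a primitive recursive list. -/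
theorem allMem {p : ι → α × ℕ → Prop} (hp : EF X p) {L : α → List ℕ} (hL : Primrec L) :
    EF X (fun i a => ∀ b ∈ L a, p i (a, b)) := by
  obtain ⟨R, u, hR, hu, H⟩ := hp
  -- the witness is a list giving a witness for every position of `L a`
  have h : Primrec₂ fun (c : α × ℕ) (b : ℕ) =>
      ((c.1, b), (Denumerable.ofNat (List ℕ) c.2).getD ((L c.1).idxOf b) 0) := by
    refine ((Primrec.fst.comp Primrec.fst).pair Primrec.snd).pair ?_
    refine (Primrec.list_getD 0).comp
      ((Primrec.ofNat (List ℕ)).comp (Primrec.snd.comp Primrec.fst)) ?_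
    exact Primrec.list_idxOf.comp Primrec.snd (hL.comp (Primrec.fst.comp Primrec.fst))
  have hR' : PrimrecRel fun (b : ℕ) (c : α × ℕ) =>
      R ((c.1, b), (Denumerable.ofNat (List ℕ) c.2).getD ((L c.1).idxOf b) 0) :=
    hR.comp (h.comp Primrec.snd Primrec.fst)
  refine ⟨_, _, hR'.forall_mem_list.comp (hL.comp Primrec.fst) Primrec.id,
    Primrec.list_flatMap (hL.comp Primrec.fst) (hu.comp₂ h), fun i a => ?_⟩
  constructor
  · intro hb
    have hb' : ∀ b, ∃ w, b ∈ L a → R ((a, b), w) ∧ ∀ d ∈ u ((a, b), w), d ∈ X i := by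
      intro b
      by_cases hbL : b ∈ L a
      · obtain ⟨w, hw⟩ := (H i _).1 (hb b hbL)
        exact ⟨w, fun _ => hw⟩
      · exact ⟨0, fun h => absurd h hbL⟩
    choose w hw using hb'
    have key : ∀ b ∈ L a, (List.map w (L a)).getD (List.idxOf b (L a)) 0 = w b := by
      intro b hb
      have := List.idxOf_lt_length_of_mem hb
      simp [List.getD, this]
    refine ⟨Encodable.encode ((L a).map w), ?_, ?_⟩
    · intro b hb
      simp only [Denumerable.ofNat_encode, id]
      rw [key b hb]
      exact (hw b hb).1
    · intro d hd
      simp only [Denumerable.ofNat_encode, List.mem_flatMap] at hd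
      obtain ⟨b, hb, hd⟩ := hd
      rw [key b hb] at hd
      exact (hw b hb).2 d hd
  · rintro ⟨w, h1, h2⟩ b hb
    refine (H i _).2 ⟨_, h1 b hb, fun d hd => h2 d ?_⟩
    simp only [List.mem_flatMap]
    exact ⟨b, hb, hd⟩

/-- Substitution of operators. -/
theorem trans {Y : ι → Set ℕ} {p : ι → α → Prop} (hY : EF X fun i b => b ∈ Y i) (hp : EF Y p) :
    EF X p := by
  obtain ⟨R, u, hR, hu, H⟩ := hp
  have : EF X fun i (c : α × ℕ) => R c ∧ ∀ b ∈ u c, b ∈ Y i :=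
    (prim hR).and (allMem (p := fun i (d : (α × ℕ) × ℕ) => d.2 ∈ Y i) (hY.comp Primrec.snd) hu)
  exact (exNat this).of_iff H

theorem reindex {κ : Type} {p : ι → α → Prop} (hp : EF X p) (f : κ → ι) :
    EF (fun k => X (f k)) (fun k => p (f k)) := by
  obtain ⟨R, u, hR, hu, H⟩ := hp
  exact ⟨R, u, hR, hu, fun k a => H (f k) a⟩

end EF

theorem primrec_testBit : PrimrecRel fun u i : ℕ => Nat.testBit u i = true := by
  have hpow : Primrec₂ fun a b : ℕ => a ^ b := Primrec₂.unpaired'.1 Nat.Primrec.pow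
  have h : PrimrecRel fun u i : ℕ => u / 2 ^ i % 2 = 1 :=
    Primrec.eq.comp (Primrec.nat_mod.comp (Primrec.nat_div.comp Primrec.fst
      (hpow.comp (Primrec.const 2) Primrec.snd)) (Primrec.const 2)) (Primrec.const 1)
  exact h.of_eq fun u i => by simp [Nat.testBit_eq_decide_div_mod_eq]

theorem exists_Dset (l : List ℕ) : ∃ u, ∀ i, i ∈ Dset u ↔ i ∈ l := by
  induction l with
  | nil => exact ⟨0, by simp [Dset]⟩
  | cons b l ih =>
    obtain ⟨u, hu⟩ := ih
    refine ⟨u ||| 2 ^ b, fun i => ?_⟩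
    have := hu i
    simp only [Dset, Set.mem_ofPred_eq] at this
    simp only [Dset, Set.mem_ofPred_eq, Nat.testBit_or, Nat.testBit_two_pow, Bool.or_eq_true, this,
      decide_eq_true_eq, List.mem_cons]
    exact or_comm.trans (or_congr_left ⟨Eq.symm, Eq.symm⟩)

theorem CE.exists_index {W : Set ℕ} (h : CE W) : ∃ e, W = WeStd e := by
  obtain ⟨f, hf, rfl⟩ := h
  obtain ⟨c, hc⟩ := Nat.Partrec.Code.exists_code.1 (Partrec.nat_iff.1 hf)
  refine ⟨Encodable.encode c, ?_⟩
  ext x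
  simp [WeStd, hc, PFun.mem_dom, Part.dom_iff_mem]

theorem CE_WeStd (e : ℕ) : CE (WeStd e) :=
  ⟨_, Partrec.nat_iff.2 (Nat.Partrec.Code.exists_code.2 ⟨Denumerable.ofNat _ e, rfl⟩), by
    ext x; simp [WeStd, PFun.mem_dom, Part.dom_iff_mem]⟩

theorem EF.enumOp {ι : Type} {X : ι → Set ℕ} {W : Set ℕ} (hW : CE W) :
    EF X (fun i a => a ∈ enumOp W (X i)) := by
  obtain ⟨e, rfl⟩ := hW.exists_index
  set c := Denumerable.ofNat Nat.Partrec.Code e with hc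
  have h1 : PrimrecPred fun d : (ℕ × ℕ) × ℕ =>
      (Nat.Partrec.Code.evaln d.2 c (Nat.pair d.1.1 d.1.2)).isSome = true :=
    Primrec.eq.comp (Primrec.option_isSome.comp (Nat.Partrec.Code.primrec_evaln.comp
      ((Primrec.snd.pair (Primrec.const c)).pair (Primrec₂.natPair.comp
        (Primrec.fst.comp Primrec.fst) (Primrec.snd.comp Primrec.fst))))) (Primrec.const true)
  have h2 : EF X fun i (d : (ℕ × ℕ) × ℕ) =>
      (Nat.Partrec.Code.evaln d.2 c (Nat.pair d.1.1 d.1.2)).isSome = true := EF.prim h1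
  have h3 : EF X fun i (d : ℕ × ℕ) => ∀ b ∈ List.range d.2, ¬ d.2.testBit b = true ∨ b ∈ X i := by
    refine EF.allMem (p := fun i (t : (ℕ × ℕ) × ℕ) => ¬ t.1.2.testBit t.2 = true ∨ t.2 ∈ X i)
      (EF.or (EF.prim ?_) (EF.mem Primrec.snd)) (Primrec.list_range.comp Primrec.snd)
    exact (primrec_testBit.comp (Primrec.snd.comp Primrec.fst) Primrec.snd).not
  refine (EF.exNat ((EF.exNat h2).and h3)).of_iff fun i a => ?_
  simp only [_root_.enumOp, Set.mem_ofPred_eq]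
  refine exists_congr fun u => and_congr ?_ ?_
  · simp only [WeStd, ← hc, Set.mem_ofPred_eq, Part.dom_iff_mem, Nat.Partrec.Code.evaln_complete,
      Option.isSome_iff_exists, Option.mem_def]
    exact exists_comm
  · constructor
    · intro h b _
      by_cases hb : u.testBit b = true
      · exact Or.inr (h hb)
      · exact Or.inl hb
    · intro h b hb
      have hb' : u.testBit b = true := hb
      have : b < u := lt_of_lt_of_le (Nat.lt_two_pow_self) (Nat.ge_two_pow_of_testBit hb')
      exact (h b (List.mem_range.2 this)).resolve_left (not_not.2 hb')

theorem EF.exists_CE {ι : Type} {X : ι → Set ℕ} {p : ι → ℕ → Prop} (hp : EF X p) :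
    ∃ W, CE W ∧ ∀ i, {a | p i a} = _root_.enumOp W (X i) := by
  obtain ⟨R, u, hR, hu, H⟩ := hp
  -- `n = ⟨a, v⟩` is enumerated as soon as some witness for `a` asks only questions in `D_v`
  have h : PrimrecRel fun (n w : ℕ) => R (n.unpair.1, w) ∧
      ∀ b ∈ u (n.unpair.1, w), Nat.testBit n.unpair.2 b = true := by
    have h1 : Primrec fun d : ℕ × ℕ => (d.1.unpair.1, d.2) :=
      (Primrec.fst.comp (Primrec.unpair.comp Primrec.fst)).pair Primrec.snd
    refine (hR.comp h1).and ?_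
    have h2 : PrimrecRel fun (b : ℕ) (v : ℕ) => Nat.testBit v b = true := primrec_testBit.swap
    exact h2.forall_mem_list.comp (hu.comp h1) (Primrec.snd.comp (Primrec.unpair.comp Primrec.fst))
  classical
  have hc : Partrec fun n : ℕ => Nat.rfind fun w => Part.some (decide (R (n.unpair.1, w) ∧
      ∀ b ∈ u (n.unpair.1, w), Nat.testBit n.unpair.2 b = true)) :=
    Partrec.rfind (Computable₂.partrec₂ (Primrec₂.to_comp h.decide))
  refine ⟨_, ⟨_, hc, rfl⟩, fun i => ?_⟩
  have hdom : ∀ a v : ℕ, (Nat.pair a v ∈ PFun.Dom fun n : ℕ => Nat.rfind fun w =>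
      Part.some (decide (R (n.unpair.1, w) ∧
        ∀ b ∈ u (n.unpair.1, w), Nat.testBit n.unpair.2 b = true))) ↔
      ∃ w, R (a, w) ∧ ∀ b ∈ u (a, w), Nat.testBit v b = true := by
    intro a v
    refine (Nat.rfind_dom (p := _)).trans ?_
    simp only [Nat.unpair_pair, Part.mem_some_iff, Part.some_dom, implies_true, and_true]
    exact exists_congr fun w => ⟨fun h => of_decide_eq_true h.symm, fun h => (decide_eq_true h).symm⟩
  ext a
  simp only [_root_.enumOp, Set.mem_ofPred_eq, H]
  constructor
  · rintro ⟨w, h1, h2⟩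
    obtain ⟨v, hv⟩ := exists_Dset (u (a, w))
    exact ⟨v, (hdom a v).2 ⟨w, h1, fun b hb => (hv b).2 hb⟩, fun b hb => h2 b ((hv b).1 hb)⟩
  · rintro ⟨v, h1, h3⟩
    obtain ⟨w, h1, h2⟩ := (hdom a v).1 h1
    exact ⟨w, h1, fun b hb => h3 (h2 b hb)⟩

/-- Single-oracle version of `EF`. -/
abbrev E1 {α : Type} [Primcodable α] (X : Set ℕ) (p : α → Prop) : Prop :=
  EF (fun _ : Unit => X) (fun _ => p)

theorem enumRed_iff {A B : Set ℕ} : EnumRed A B ↔ E1 B (fun a => a ∈ A) := by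
  constructor
  · rintro ⟨W, hW, rfl⟩
    exact EF.enumOp hW
  · intro h
    obtain ⟨W, hW, h⟩ := h.exists_CE
    exact ⟨W, hW, h ()⟩

theorem EnumRed.e1 {A B : Set ℕ} {α : Type} [Primcodable α] (h : EnumRed A B) {f : α → ℕ}
    (hf : Primrec f) : E1 B (fun a => f a ∈ A) :=
  (enumRed_iff.1 h).comp hf

theorem EnumRed.refl (A : Set ℕ) : EnumRed A A := enumRed_iff.2 (EF.mem Primrec.id)

theorem EnumRed.trans {A B C : Set ℕ} (h : EnumRed A B) (h' : EnumRed B C) : EnumRed A C :=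
  enumRed_iff.2 ((enumRed_iff.1 h').trans (enumRed_iff.1 h))

theorem mem_oplus {A B : Set ℕ} {n : ℕ} :
    n ∈ oplus A B ↔ (n % 2 = 0 ∧ n / 2 ∈ A) ∨ (n % 2 = 1 ∧ n / 2 ∈ B) := by
  simp only [oplus, Set.mem_union, Set.mem_image]
  constructor
  · rintro (⟨x, hx, rfl⟩ | ⟨x, hx, rfl⟩)
    · left; exact ⟨by omega, by rwa [show 2 * x / 2 = x by omega]⟩
    · right; exact ⟨by omega, by rwa [show (2 * x + 1) / 2 = x by omega]⟩
  · rintro (⟨h, hx⟩ | ⟨h, hx⟩)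
    · exact Or.inl ⟨_, hx, by omega⟩
    · exact Or.inr ⟨_, hx, by omega⟩

theorem EF.oplus {ι : Type} {X A B : ι → Set ℕ} (hA : EF X fun i a => a ∈ A i)
    (hB : EF X fun i a => a ∈ B i) : EF X fun i a => a ∈ _root_.oplus (A i) (B i) := by
  have h2 : Primrec fun n : ℕ => n / 2 := Primrec.nat_div.comp Primrec.id (Primrec.const 2)
  have hm : Primrec fun n : ℕ => n % 2 := Primrec.nat_mod.comp Primrec.id (Primrec.const 2)
  refine EF.of_iff ?_ fun i a => mem_oplus
  exact ((EF.prim (Primrec.eq.comp hm (Primrec.const 0))).and (hA.comp h2)).or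
    ((EF.prim (Primrec.eq.comp hm (Primrec.const 1))).and (hB.comp h2))

theorem EnumRed.oplus {A B X : Set ℕ} (hA : EnumRed A X) (hB : EnumRed B X) :
    EnumRed (_root_.oplus A B) X :=
  enumRed_iff.2 (EF.oplus (enumRed_iff.1 hA) (enumRed_iff.1 hB))

theorem EnumRed.oplus_left (A B : Set ℕ) : EnumRed A (_root_.oplus A B) := by
  refine enumRed_iff.2 ((EF.mem Primrec.nat_double).of_iff fun _ a => ?_)
  rw [mem_oplus]
  simp

theorem EnumRed.oplus_right (A B : Set ℕ) : EnumRed B (_root_.oplus A B) := by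
  refine enumRed_iff.2 ((EF.mem Primrec.nat_double_succ).of_iff fun _ a => ?_)
  rw [mem_oplus, show (2 * a + 1) / 2 = a by omega]
  simp [Nat.add_mod]

/-! ### Finite sets of facts and fusion -/

/-- A finite list of codes of pairs is the graph of a finite partial function. -/
def Consistent (L : List ℕ) : Prop := ∀ a ∈ L, ∀ b ∈ L, a.unpair.1 = b.unpair.1 → a = b

/-- The finite set of members of a list. -/
def lset (L : List ℕ) : Set ℕ := {a | a ∈ L}

/-- Everything that the operator `W`, with oracle `G`, can enumerate from a finite function all of
whose values are allowed by `K`. -/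
def possible (W G K : Set ℕ) : Set ℕ :=
  {b | ∃ L, Consistent L ∧ (∀ a ∈ L, a ∈ K) ∧ b ∈ enumOp W (oplus G (lset L))}

theorem enumOp_mono (W : Set ℕ) {A B : Set ℕ} (h : A ⊆ B) : enumOp W A ⊆ enumOp W B :=
  fun _ ⟨u, hu, hu'⟩ => ⟨u, hu, hu'.trans h⟩

theorem oplus_mono (G : Set ℕ) {A B : Set ℕ} (h : A ⊆ B) : oplus G A ⊆ oplus G B :=
  Set.union_subset_union_right _ (Set.image_mono h)

theorem tgraph_inj {F : ℕ → ℕ} {a b : ℕ} (ha : a ∈ tgraph F) (hb : b ∈ tgraph F)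
    (h : a.unpair.1 = b.unpair.1) : a = b := by
  have h2 : a.unpair.2 = b.unpair.2 := by
    rw [← show F a.unpair.1 = a.unpair.2 from ha, ← show F b.unpair.1 = b.unpair.2 from hb, h]
  rw [← Nat.pair_unpair a, ← Nat.pair_unpair b, h, h2]

theorem pair_mem_tgraph {F : ℕ → ℕ} {x y : ℕ} : Nat.pair x y ∈ tgraph F ↔ F x = y := by
  simp [tgraph]

theorem exists_use {W G : Set ℕ} {F : ℕ → ℕ} {b : ℕ} (h : b ∈ enumOp W (oplus G (tgraph F))) :
    ∃ L, Consistent L ∧ (∀ a ∈ L, a ∈ tgraph F) ∧ b ∈ enumOp W (oplus G (lset L)) := by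
  obtain ⟨u, hu, hs⟩ := h
  have key : ∀ a ∈ (List.range u).filter (fun a => u.testBit (2 * a + 1)), a ∈ tgraph F := by
    intro a ha
    have := hs (List.mem_filter.1 ha).2
    rw [mem_oplus, show (2 * a + 1) / 2 = a by omega] at this
    rcases this with ⟨h, _⟩ | ⟨_, h⟩
    · omega
    · exact h
  refine ⟨_, fun a ha b hb => tgraph_inj (key a ha) (key b hb), key, u, hu, fun q hq => ?_⟩
  have h1 := hs hq
  rw [mem_oplus] at h1 ⊢
  rcases h1 with h1 | ⟨h1, _⟩
  · exact Or.inl h1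
  · refine Or.inr ⟨h1, List.mem_filter.2 ⟨List.mem_range.2 ?_, ?_⟩⟩
    · have : q < u := lt_of_lt_of_le (Nat.lt_two_pow_self) (Nat.ge_two_pow_of_testBit hq)
      omega
    · rw [show 2 * (q / 2) + 1 = q by omega]
      exact hq

theorem primrec_list_mem : PrimrecRel fun (L : List ℕ) (a : ℕ) => a ∈ L := by
  have h : PrimrecRel fun (b a : ℕ) => b = a := Primrec.eq
  exact h.exists_mem_list.of_eq fun L a => by simp

/-- `possible W G K` is enumerable from any oracle enumerating `G` and `K`, also uniformly in a
parameter on which `K` depends. -/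
theorem E1.possible {W G Y : Set ℕ} (hW : CE W) (hG : EnumRed G Y) {K : ℕ → Set ℕ}
    (hK : E1 Y fun d : ℕ × ℕ => d.2 ∈ K d.1) :
    E1 Y fun d : ℕ × ℕ => d.2 ∈ _root_.possible W G (K d.1) := by
  obtain ⟨R, u, hR, hu, H⟩ := EF.enumOp (X := fun L => oplus G (lset L)) hW
  have h1 : E1 Y fun c : (ℕ × ℕ) × List ℕ => Consistent c.2 := by
    refine EF.allMem (p := fun _ (t : ((ℕ × ℕ) × List ℕ) × ℕ) =>
      ∀ b ∈ t.1.2, t.2.unpair.1 = b.unpair.1 → t.2 = b) ?_ Primrec.snd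
    refine EF.allMem (p := fun _ (t : (((ℕ × ℕ) × List ℕ) × ℕ) × ℕ) =>
      t.1.2.unpair.1 = t.2.unpair.1 → t.1.2 = t.2) ?_ (Primrec.snd.comp Primrec.fst)
    have h2 : Primrec fun t : (((ℕ × ℕ) × List ℕ) × ℕ) × ℕ => t.1.2 := Primrec.snd.comp Primrec.fst
    have : PrimrecPred fun t : (((ℕ × ℕ) × List ℕ) × ℕ) × ℕ =>
        ¬ t.1.2.unpair.1 = t.2.unpair.1 ∨ t.1.2 = t.2 :=
      (Primrec.eq.comp (Primrec.fst.comp (Primrec.unpair.comp h2))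
        (Primrec.fst.comp (Primrec.unpair.comp Primrec.snd))).not.or (Primrec.eq.comp h2 Primrec.snd)
    exact (EF.prim this).of_iff fun _ _ => imp_iff_not_or
  have h2 : E1 Y fun c : (ℕ × ℕ) × List ℕ => ∀ a ∈ c.2, a ∈ K c.1.1 := by
    refine EF.allMem (p := fun _ (t : ((ℕ × ℕ) × List ℕ) × ℕ) => t.2 ∈ K t.1.1.1) ?_ Primrec.snd
    exact EF.comp (f := fun t : ((ℕ × ℕ) × List ℕ) × ℕ => (t.1.1.1, t.2)) hK
      ((Primrec.fst.comp (Primrec.fst.comp Primrec.fst)).pair Primrec.snd)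
  have h3 : E1 Y fun c : (ℕ × ℕ) × List ℕ => c.1.2 ∈ _root_.enumOp W (oplus G (lset c.2)) := by
    have hq : E1 Y fun t : (((ℕ × ℕ) × List ℕ) × ℕ) × ℕ => t.2 ∈ oplus G (lset t.1.1.2) := by
      have d2 : Primrec fun t : (((ℕ × ℕ) × List ℕ) × ℕ) × ℕ => t.2 / 2 :=
        Primrec.nat_div.comp Primrec.snd (Primrec.const 2)
      have m2 : Primrec fun t : (((ℕ × ℕ) × List ℕ) × ℕ) × ℕ => t.2 % 2 :=
        Primrec.nat_mod.comp Primrec.snd (Primrec.const 2)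
      refine EF.of_iff ?_ fun _ t => mem_oplus
      refine ((EF.prim (Primrec.eq.comp m2 (Primrec.const 0))).and (hG.e1 d2)).or
        ((EF.prim (Primrec.eq.comp m2 (Primrec.const 1))).and (EF.prim ?_))
      exact primrec_list_mem.comp (Primrec.snd.comp (Primrec.fst.comp Primrec.fst)) d2
    have hf : Primrec fun t : ((ℕ × ℕ) × List ℕ) × ℕ => (t.1.1.2, t.2) :=
      (Primrec.snd.comp (Primrec.fst.comp Primrec.fst)).pair Primrec.snd
    have hall : E1 Y fun t : ((ℕ × ℕ) × List ℕ) × ℕ =>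
        ∀ q ∈ u (t.1.1.2, t.2), q ∈ oplus G (lset t.1.2) := EF.allMem hq (hu.comp hf)
    exact (EF.exNat ((EF.prim (hR.comp hf)).and hall)).of_iff fun _ c => H c.2 c.1.2
  exact EF.exList (h1.and (h2.and h3))

theorem EnumRed.possible {W G Y K : Set ℕ} (hW : CE W) (hG : EnumRed G Y) (hK : EnumRed K Y) :
    EnumRed (_root_.possible W G K) Y := by
  have := E1.possible (K := fun _ => K) hW hG (hK.e1 Primrec.snd)
  exact enumRed_iff.2 (this.comp ((Primrec.const 0).pair Primrec.id))

open Classical in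
/-- The function `p` overwritten by the finitely many values listed in `L`. -/
noncomputable def upd (p : ℕ → ℕ) (L : List ℕ) : ℕ → ℕ :=
  fun n => if h : ∃ y, Nat.pair n y ∈ L then h.choose else p n

theorem upd_of_mem {p : ℕ → ℕ} {L : List ℕ} (hL : Consistent L) {n y : ℕ}
    (h : Nat.pair n y ∈ L) : upd p L n = y := by
  have h' : ∃ y, Nat.pair n y ∈ L := ⟨y, h⟩
  rw [upd, dif_pos h']
  have := hL _ h'.choose_spec _ h (by simp)
  exact (Nat.pair_eq_pair.1 this).2

theorem upd_of_not_mem {p : ℕ → ℕ} {L : List ℕ} {n : ℕ} (h : ∀ y, Nat.pair n y ∉ L) :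
    upd p L n = p n := by
  rw [upd, dif_neg (by simpa using h)]

theorem subset_tgraph_upd {p : ℕ → ℕ} {L : List ℕ} (hL : Consistent L) {a : ℕ} (h : a ∈ L) :
    upd p L a.unpair.1 = a.unpair.2 :=
  upd_of_mem hL (by simpa using h)

theorem upd_cases {p : ℕ → ℕ} {L : List ℕ} (hL : Consistent L) (n : ℕ) :
    Nat.pair n (upd p L n) ∈ L ∨ upd p L n = p n := by
  by_cases h : ∃ y, Nat.pair n y ∈ L
  · obtain ⟨y, h⟩ := h
    left
    rwa [upd_of_mem hL h]
  · right
    exact upd_of_not_mem (by simpa using h)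

theorem tgraph_upd_red {p : ℕ → ℕ} {L : List ℕ} (hL : Consistent L) :
    EnumRed (tgraph (upd p L)) (tgraph p) := by
  have hne : EF (fun _ : Unit => tgraph p) fun _ (a : ℕ) => ∀ b ∈ L, ¬ b.unpair.1 = a.unpair.1 := by
    refine EF.allMem (p := fun _ (t : ℕ × ℕ) => ¬ t.2.unpair.1 = t.1.unpair.1) (EF.prim ?_)
      (Primrec.const L)
    exact (Primrec.eq.comp (Primrec.fst.comp (Primrec.unpair.comp Primrec.snd))
      (Primrec.fst.comp (Primrec.unpair.comp Primrec.fst))).not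
  refine enumRed_iff.2 (((EF.prim (primrec_list_mem.comp (Primrec.const L) Primrec.id)).or
    (hne.and (EF.mem Primrec.id))).of_iff fun _ a => ?_)
  constructor
  · intro h
    by_cases h' : ∃ y, Nat.pair a.unpair.1 y ∈ L
    · left
      obtain ⟨y, hy⟩ := h'
      have h1 := upd_of_mem (p := p) hL hy
      rw [show upd p L a.unpair.1 = a.unpair.2 from h] at h1
      rw [← h1, Nat.pair_unpair] at hy
      exact hy
    · right
      have h'' : ∀ y, Nat.pair a.unpair.1 y ∉ L := by simpa using h'
      refine ⟨fun b hb hba => h'' b.unpair.2 ?_, ?_⟩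
      · rw [← hba, Nat.pair_unpair]
        exact hb
      · exact (upd_of_not_mem (p := p) h'').symm.trans h
  · rintro (h | ⟨h1, h2⟩)
    · exact subset_tgraph_upd hL h
    · refine (upd_of_not_mem fun y hy => ?_).trans h2
      exact h1 _ hy (by simp)

/-- A fusion argument: each stage `s` fixes more values of `p` (those outside the shrinking set `D`
of still undetermined arguments) and forces requirement `s` for every function agreeing with `p`
outside `D`; argument `s` is determined at stage `s`, so the limit is total and meets everything. -/
theorem fusion {Cond : ℕ → (ℕ → ℕ) → Set ℕ → Prop} {Req : ℕ → (ℕ → ℕ) → Prop}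
    (h0 : ∃ p D, Cond 0 p D)
    (hs : ∀ s p D, Cond s p D → ∃ p' D', Cond (s + 1) p' D' ∧ D' ⊆ D ∧
      (∀ n, n ∉ D → p' n = p n) ∧ s ∉ D' ∧ ∀ F : ℕ → ℕ, (∀ n, n ∉ D' → F n = p' n) → Req s F) :
    ∃ F : ℕ → ℕ, ∀ s, Req s F := by
  classical
  obtain ⟨p0, D0, h0⟩ := h0
  choose! P D hc hsub hag hsD hreq using hs
  let st : ℕ → (ℕ → ℕ) × Set ℕ :=
    fun s => Nat.rec (p0, D0) (fun s q => (P s q.1 q.2, D s q.1 q.2)) s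
  have hst : ∀ s, Cond s (st s).1 (st s).2 := by
    intro s
    induction s with
    | zero => exact h0
    | succ s ih => exact hc s _ _ ih
  have hmono : ∀ s t, s ≤ t → (st t).2 ⊆ (st s).2 ∧ ∀ n, n ∉ (st s).2 → (st t).1 n = (st s).1 n := by
    intro s t hst'
    induction t, hst' using Nat.le_induction with
    | base => exact ⟨subset_rfl, fun _ _ => rfl⟩
    | succ t _ ih =>
      refine ⟨(hsub t _ _ (hst t)).trans ih.1, fun n hn => ?_⟩
      exact (hag t _ _ (hst t) n fun h => hn (ih.1 h)).trans (ih.2 n hn)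
  refine ⟨fun n => (st (n + 1)).1 n, fun s => hreq s _ _ (hst s) _ fun n hn => ?_⟩
  have hn1 : n ∉ (st (n + 1)).2 := hsD n _ _ (hst n)
  have hn2 : n ∉ (st (s + 1)).2 := hn
  show (st (n + 1)).1 n = (st (s + 1)).1 n
  rcases le_total (n + 1) (s + 1) with h | h
  · exact ((hmono _ _ h).2 n hn1).symm
  · exact (hmono _ _ h).2 n hn2

/-! ### Joining above a set while avoiding lower cones -/

/-- Arguments of the function under construction are read as finite lists. -/
def loc (n : ℕ) : List ℕ := Denumerable.ofNat (List ℕ) n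

theorem loc_encode (σ : List ℕ) : loc (Encodable.encode σ) = σ := Denumerable.ofNat_encode σ

theorem primrec_loc : Primrec loc := Primrec.ofNat _

/-- A value which is harmless or codes an element of `C`. -/
def Okay (C : Set ℕ) (y : ℕ) : Prop := y = 0 ∨ ∃ c ∈ C, y = c + 1

/-- Conditions for `join_step`: `σ` is a list of elements of `P`, `p` is enumerable from `G`, and at
all arguments that are lists of elements of `P` the value of `p` is harmless or codes an element
of `C`.  Arguments ending in `σ` are considered undetermined. -/
structure JCond (G P C : Set ℕ) (σ : List ℕ) (p : ℕ → ℕ) : Prop where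
  true_mem : ∀ v ∈ σ, v ∈ P
  red : EnumRed (tgraph p) G
  okay : ∀ n, (∀ v ∈ loc n, v ∈ P) → Okay C (p n)

theorem exists_long {P : Set ℕ} {v₀ : ℕ} (hv₀ : v₀ ∈ P) {σ : List ℕ} (hσ : ∀ v ∈ σ, v ∈ P) (N : ℕ) :
    ∃ τ : List ℕ, σ <:+ τ ∧ (∀ v ∈ τ, v ∈ P) ∧ N < τ.length := by
  refine ⟨List.replicate (N + 1) v₀ ++ σ, List.suffix_append _ _, fun v hv => ?_, ?_⟩
  · rcases List.mem_append.1 hv with h | h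
    · rw [List.eq_of_mem_replicate h]
      exact hv₀
    · exact hσ v h
  · simp
    omega

theorem not_suffix_of_length {σ τ : List ℕ} (h : τ.length < σ.length) : ¬ σ <:+ τ :=
  fun h' => absurd h'.length_le (by omega)

theorem exists_bound (f : ℕ → ℕ) (L : List ℕ) : ∃ N, ∀ a ∈ L, f a < N := by
  induction L with
  | nil => exact ⟨0, by simp⟩
  | cons b L ih =>
    obtain ⟨N, hN⟩ := ih
    refine ⟨max N (f b + 1), fun a ha => ?_⟩
    rcases List.mem_cons.1 ha with rfl | h
    · omega
    · have := hN a h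
      omega

theorem exists_mem_of_not_red {P G : Set ℕ} (h : ¬ EnumRed P G) : ∃ v, v ∈ P := by
  by_contra h'
  refine h (enumRed_iff.2 (EF.of_iff (EF.prim (p := fun _ : ℕ => False)
    ⟨fun _ => isFalse id, Primrec.const false⟩) fun _ a => ?_))
  exact ⟨fun ha => h' ⟨a, ha⟩, False.elim⟩

/-- Forcing one inequality `Φ_W(G ⊕ F) ≠ B`.  Either a finite extension respecting the coding makes
the operator enumerate something wrong.  Or contradictory outputs, obtained from `p` with its values
changed at arguments ending in `v :: σ` only, exist at most for `v ∈ P`; by `P ≰ₑ G` some `v ∈ P`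
admits none, and then a correct computation from a function that agrees with `p` at the arguments
not ending in `v :: σ` would make `B` enumerable from `G`. -/
theorem join_force {G P C W : Set ℕ} (hP : ¬ EnumRed P G) (hW : CE W) {B : ℕ → ℕ}
    (hB : ¬ EnumRed (tgraph B) G) {σ : List ℕ} {p : ℕ → ℕ} (h : JCond G P C σ p) :
    ∃ σ' p', JCond G P C σ' p' ∧ σ <:+ σ' ∧ (∀ n, ¬ σ <:+ loc n → p' n = p n) ∧
      ∀ F : ℕ → ℕ, (∀ n, ¬ σ' <:+ loc n → F n = p' n) → tgraph B ≠ enumOp W (oplus G (tgraph F)) := by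
  obtain ⟨v₀, hv₀⟩ := exists_mem_of_not_red hP
  by_cases hcase : ∃ L b, Consistent L ∧ (∀ a ∈ L, (σ <:+ loc a.unpair.1 ∨ a ∈ tgraph p) ∧
      ((∀ v ∈ loc a.unpair.1, v ∈ P) → Okay C a.unpair.2)) ∧
      b ∈ enumOp W (oplus G (lset L)) ∧ b ∉ tgraph B
  · obtain ⟨L, b, hL, hLK, hb, hbB⟩ := hcase
    obtain ⟨N, hN⟩ := exists_bound (fun a => (loc a.unpair.1).length) L
    obtain ⟨τ, hτ, hτP, hτN⟩ := exists_long hv₀ h.true_mem N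
    refine ⟨τ, upd p L, ⟨hτP, (tgraph_upd_red hL).trans h.red, fun n hn => ?_⟩, hτ, fun n hn => ?_,
      fun F hF heq => hbB ?_⟩
    · rcases upd_cases (p := p) hL n with h1 | h1
      · have := (hLK _ h1).2
        simp only [Nat.unpair_pair] at this
        exact this hn
      · rw [h1]
        exact h.okay n hn
    · rcases upd_cases (p := p) hL n with h1 | h1
      · have := (hLK _ h1).1
        simp only [Nat.unpair_pair] at this
        rcases this with h2 | h2
        · exact absurd h2 hn
        · exact (pair_mem_tgraph.1 h2).symm
      · exact h1
    · rw [heq]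
      refine enumOp_mono W (oplus_mono G fun a ha => ?_) hb
      have ha' : a ∈ L := ha
      refine (hF _ (not_suffix_of_length ?_)).trans (subset_tgraph_upd hL ha')
      have := hN a ha'
      omega
  · have hall : ∀ L b, Consistent L → (∀ a ∈ L, (σ <:+ loc a.unpair.1 ∨ a ∈ tgraph p) ∧
        ((∀ v ∈ loc a.unpair.1, v ∈ P) → Okay C a.unpair.2)) →
        b ∈ enumOp W (oplus G (lset L)) → b ∈ tgraph B := by
      intro L b h1 h2 h3
      by_contra h4
      exact hcase ⟨L, b, h1, h2, h3, h4⟩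
    let K : ℕ → Set ℕ := fun v => {a | (v :: σ) <:+ loc a.unpair.1 ∨ a ∈ tgraph p}
    have hK : E1 G fun d : ℕ × ℕ => d.2 ∈ K d.1 := by
      refine EF.or ?_ (h.red.e1 Primrec.snd)
      have : EF (fun _ : Unit => G) fun _ (c : (ℕ × ℕ) × List ℕ) =>
          c.2 ++ (c.1.1 :: σ) = loc c.1.2.unpair.1 := by
        refine EF.prim (Primrec.eq.comp (Primrec.list_append.comp Primrec.snd
          (Primrec.list_cons.comp (Primrec.fst.comp Primrec.fst) (Primrec.const σ))) ?_)
        exact primrec_loc.comp (Primrec.fst.comp (Primrec.unpair.comp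
          (Primrec.snd.comp Primrec.fst)))
      exact EF.exList this
    have hT := E1.possible hW (EnumRed.refl G) hK
    -- `S` is the set of `v` for which contradictory outputs are possible
    let S : Set ℕ := {v | ∃ b b', (b ∈ possible W G (K v) ∧ b' ∈ possible W G (K v)) ∧
      b.unpair.1 = b'.unpair.1 ∧ ¬ b = b'}
    have hS : EnumRed S G := by
      refine enumRed_iff.2 ?_
      refine EF.exNat (p := fun _ (c : ℕ × ℕ) => ∃ b', (c.2 ∈ possible W G (K c.1) ∧
        b' ∈ possible W G (K c.1)) ∧ c.2.unpair.1 = b'.unpair.1 ∧ ¬ c.2 = b') ?_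
      refine EF.exNat (p := fun _ (c : (ℕ × ℕ) × ℕ) => (c.1.2 ∈ possible W G (K c.1.1) ∧
        c.2 ∈ possible W G (K c.1.1)) ∧ c.1.2.unpair.1 = c.2.unpair.1 ∧ ¬ c.1.2 = c.2) ?_
      have e1 : Primrec fun c : (ℕ × ℕ) × ℕ => c.1.2 := Primrec.snd.comp Primrec.fst
      have e2 : Primrec fun c : (ℕ × ℕ) × ℕ => (c.1.1, c.2) :=
        (Primrec.fst.comp Primrec.fst).pair Primrec.snd
      exact ((hT.comp Primrec.fst).and (hT.comp e2)).and (EF.prim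
        ((Primrec.eq.comp (Primrec.fst.comp (Primrec.unpair.comp e1))
          (Primrec.fst.comp (Primrec.unpair.comp Primrec.snd))).and
          (Primrec.eq.comp e1 Primrec.snd).not))
    have hSP : S ⊆ P := by
      rintro v ⟨b, b', ⟨⟨L, h1, h2, h3⟩, ⟨L', h1', h2', h3'⟩⟩, h4, h5⟩
      by_contra hv
      have hgood : ∀ a ∈ K v, (σ <:+ loc a.unpair.1 ∨ a ∈ tgraph p) ∧
          ((∀ v ∈ loc a.unpair.1, v ∈ P) → Okay C a.unpair.2) := by
        rintro a (ha | ha)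
        · refine ⟨Or.inl ((List.suffix_cons v σ).trans ha), fun hP' => ?_⟩
          exact absurd (hP' v (ha.subset (by simp))) hv
        · refine ⟨Or.inr ha, fun hP' => ?_⟩
          rw [← show p a.unpair.1 = a.unpair.2 from ha]
          exact h.okay _ hP'
      exact h5 (tgraph_inj (hall L b h1 (fun a ha => hgood a (h2 a ha)) h3)
        (hall L' b' h1' (fun a ha => hgood a (h2' a ha)) h3') h4)
    obtain ⟨v, hvP, hvS⟩ : ∃ v ∈ P, v ∉ S := by
      by_contra hcon
      push Not at hcon
      exact hP (Set.Subset.antisymm hSP hcon ▸ hS)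
    refine ⟨v :: σ, p, ⟨?_, h.red, h.okay⟩, List.suffix_cons v σ, fun _ _ => rfl,
      fun F hF heq => hB ?_⟩
    · intro w hw
      rcases List.mem_cons.1 hw with rfl | hw
      · exact hvP
      · exact h.true_mem w hw
    have hsub : tgraph B ⊆ possible W G (K v) := by
      intro b hb
      rw [heq] at hb
      obtain ⟨L, h1, h2, h3⟩ := exists_use hb
      refine ⟨L, h1, fun a ha => ?_, h3⟩
      by_cases h4 : (v :: σ) <:+ loc a.unpair.1
      · exact Or.inl h4
      · exact Or.inr ((hF _ h4).symm.trans (h2 a ha))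
    have hEq : tgraph B = possible W G (K v) := by
      refine Set.Subset.antisymm hsub fun b hb => ?_
      have hb0 : Nat.pair b.unpair.1 (B b.unpair.1) ∈ tgraph B := pair_mem_tgraph.2 rfl
      by_cases hbb : b = Nat.pair b.unpair.1 (B b.unpair.1)
      · rw [hbb]
        exact hb0
      · exact absurd ⟨b, _, ⟨hb, hsub hb0⟩, by simp, hbb⟩ hvS
    rw [hEq]
    exact enumRed_iff.2 (hT.comp (f := fun b : ℕ => (v, b)) ((Primrec.const v).pair Primrec.id))

/-- If `P ≰ₑ G` and no `B r` is below `G`, then some total `F` joins `P` above `C` while no `B r` is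
below `G ⊕ F`.  The set `C` is read off from `F` as the set of `c` such that `F(ρ) = c + 1` for some
list `ρ` of elements of `P`. -/
theorem join_step {G P C : Set ℕ} (hP : ¬ EnumRed P G) (B : ℕ → ℕ → ℕ)
    (hB : ∀ r, ¬ EnumRed (tgraph (B r)) G) :
    ∃ F : ℕ → ℕ, EnumRed C (oplus (tgraph F) P) ∧
      ∀ r, ¬ EnumRed (tgraph (B r)) (oplus G (tgraph F)) := by
  classical
  obtain ⟨v₀, hv₀⟩ := exists_mem_of_not_red hP
  obtain ⟨F, hF⟩ : ∃ F : ℕ → ℕ, ∀ s, ((∀ v ∈ loc s, v ∈ P) → Okay C (F s)) ∧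
      (s ∈ C → ∃ n, (∀ v ∈ loc n, v ∈ P) ∧ F n = s + 1) ∧
      tgraph (B s.unpair.1) ≠ enumOp (WeStd s.unpair.2) (oplus G (tgraph F)) := by
    refine fusion (Cond := fun _ p D => ∃ σ, D = {n | σ <:+ loc n} ∧ JCond G P C σ p)
      ⟨fun _ => 0, _, [], rfl, by simp, ?_, fun _ _ => Or.inl rfl⟩ ?_
    · refine enumRed_iff.2 ((EF.prim (p := fun a : ℕ => 0 = a.unpair.2) ?_).of_iff
        fun _ a => Iff.rfl)
      exact Primrec.eq.comp (Primrec.const 0) (Primrec.snd.comp Primrec.unpair)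
    rintro s p D ⟨σ, rfl, h⟩
    obtain ⟨σ₁, p₁, h₁, hσ₁, hag, hforce⟩ :=
      join_force hP (CE_WeStd s.unpair.2) (hB s.unpair.1) h
    -- the value `s + 1` is placed at the argument `σ₁` when `s ∈ C`
    set y := if s ∈ C then s + 1 else 0 with hy
    set n₁ := Encodable.encode σ₁ with hn₁
    have hcon : Consistent [Nat.pair n₁ y] := by
      intro a ha b hb _
      rw [List.mem_singleton.1 ha, List.mem_singleton.1 hb]
    have hval : upd p₁ [Nat.pair n₁ y] n₁ = y := upd_of_mem hcon (by simp)
    have hne : ∀ n, n ≠ n₁ → upd p₁ [Nat.pair n₁ y] n = p₁ n := by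
      intro n hn
      refine upd_of_not_mem fun z hz => hn ?_
      exact (Nat.pair_eq_pair.1 (List.mem_singleton.1 hz)).1
    obtain ⟨τ, hτ, hτP, hτN⟩ := exists_long hv₀ h₁.true_mem (max (loc s).length σ₁.length)
    have hloc : loc n₁ = σ₁ := loc_encode σ₁
    have hokay : ∀ n, (∀ v ∈ loc n, v ∈ P) → Okay C (upd p₁ [Nat.pair n₁ y] n) := by
      intro n hn
      by_cases hnn : n = n₁
      · rw [hnn, hval, hy]
        by_cases hsC : s ∈ C
        · rw [if_pos hsC]
          exact Or.inr ⟨s, hsC, rfl⟩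
        · rw [if_neg hsC]
          exact Or.inl rfl
      · rw [hne n hnn]
        exact h₁.okay n hn
    have hsτ : ¬ τ <:+ loc s := not_suffix_of_length (by omega)
    have hnτ : ¬ τ <:+ loc n₁ := not_suffix_of_length (by rw [hloc]; omega)
    refine ⟨upd p₁ [Nat.pair n₁ y], _, ⟨τ, rfl, hτP, (tgraph_upd_red hcon).trans h₁.red, hokay⟩,
      fun n hn => (hσ₁.trans hτ).trans hn, fun n hn => ?_, hsτ, fun F hF => ⟨fun hs => ?_, ?_, ?_⟩⟩
    · have hnσ : ¬ σ <:+ loc n := hn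
      rw [← hag n hnσ]
      refine hne n ?_
      rintro rfl
      rw [hloc] at hnσ
      exact hnσ hσ₁
    · rw [hF s hsτ]
      exact hokay s hs
    · intro hsC
      refine ⟨n₁, ?_, ?_⟩
      · rw [hloc]
        exact h₁.true_mem
      · rw [hF n₁ hnτ, hval, hy, if_pos hsC]
    · refine hforce F fun n hn => ?_
      have hnn : n ≠ n₁ := by
        rintro rfl
        rw [hloc] at hn
        exact hn List.suffix_rfl
      exact (hF n fun hc => hn (hτ.trans hc)).trans (hne n hnn)
  refine ⟨F, ?_, ?_⟩
  · have h1 : EF (fun _ : Unit => oplus (tgraph F) P) fun _ (c : ℕ × ℕ) =>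
        Nat.pair c.2 (c.1 + 1) ∈ tgraph F :=
      (EnumRed.oplus_left (tgraph F) P).e1 (f := fun c : ℕ × ℕ => Nat.pair c.2 (c.1 + 1))
        (Primrec₂.natPair.comp Primrec.snd (Primrec.succ.comp Primrec.fst))
    have h2 : EF (fun _ : Unit => oplus (tgraph F) P) fun _ (c : ℕ × ℕ) => ∀ v ∈ loc c.2, v ∈ P :=
      EF.allMem (p := fun _ (t : (ℕ × ℕ) × ℕ) => t.2 ∈ P)
        ((EnumRed.oplus_right (tgraph F) P).e1 Primrec.snd) (primrec_loc.comp Primrec.snd)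
    refine enumRed_iff.2 ((EF.exNat (h1.and h2)).of_iff fun _ c => ?_)
    simp only [pair_mem_tgraph]
    constructor
    · intro hc
      obtain ⟨n, hn, hn'⟩ := (hF c).2.1 hc
      exact ⟨n, hn', hn⟩
    · rintro ⟨n, hn', hn⟩
      rcases (hF n).1 hn with h0 | ⟨c', hc', h0⟩
      · omega
      · rwa [show c = c' by omega]
  · rintro r ⟨W, hW, heq⟩
    obtain ⟨e, rfl⟩ := hW.exists_index
    have := (hF (Nat.pair r e)).2.2
    simp only [Nat.unpair_pair] at this
    exact this heq

/-! ### A total upper bound avoiding a cone -/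

/-- An increasing sequence of oracles `Y s` none of which enumerates `B`, computing successively
total functions `h s`, has a total `F` above all `h s` with `B` not below `Y 0 ⊕ F`.  The column `s`
of `F` agrees with `h s` up to finitely many values; the finitely many others are used to force the
inequalities. -/
theorem upper_bound {Y : ℕ → Set ℕ} {h : ℕ → ℕ → ℕ} (hY : ∀ s, EnumRed (Y s) (Y (s + 1)))
    (hh : ∀ s, EnumRed (tgraph (h s)) (Y (s + 1))) {B : ℕ → ℕ}
    (hB : ∀ s, ¬ EnumRed (tgraph B) (Y s)) :
    ∃ F : ℕ → ℕ, (∀ s, EnumRed (tgraph (h s)) (tgraph F)) ∧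
      ¬ EnumRed (tgraph B) (oplus (Y 0) (tgraph F)) := by
  classical
  have hY0 : ∀ s, EnumRed (Y 0) (Y s) := by
    intro s
    induction s with
    | zero => exact EnumRed.refl _
    | succ s ih => exact ih.trans (hY s)
  have u1 : Primrec fun a : ℕ => a.unpair.1 := Primrec.fst.comp Primrec.unpair
  have u2 : Primrec fun a : ℕ => a.unpair.2 := Primrec.snd.comp Primrec.unpair
  have u11 : Primrec fun a : ℕ => a.unpair.1.unpair.1 := u1.comp u1
  obtain ⟨F, hF⟩ : ∃ F : ℕ → ℕ, ∀ s, (∃ M, ∀ z, M ≤ z → F (Nat.pair s z) = h s z) ∧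
      tgraph B ≠ enumOp (WeStd s) (oplus (Y 0) (tgraph F)) := by
    refine fusion (Cond := fun s p D => ∃ N, D = {n | s ≤ n.unpair.1 ∧ N ≤ n} ∧
      EnumRed {a | ¬ (s ≤ a.unpair.1.unpair.1 ∧ N ≤ a.unpair.1) ∧ a ∈ tgraph p} (Y s))
      ⟨fun _ => 0, _, 0, rfl, ?_⟩ ?_
    · refine enumRed_iff.2 (EF.of_iff (EF.prim (p := fun _ : ℕ => False)
        ⟨fun _ => isFalse id, Primrec.const false⟩) fun _ a => ?_)
      simp
    rintro s p D ⟨N, rfl, hQ⟩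
    set Q : Set ℕ := {a | ¬ (s ≤ a.unpair.1.unpair.1 ∧ N ≤ a.unpair.1) ∧ a ∈ tgraph p} with hQdef
    let K : Set ℕ := {a | (s ≤ a.unpair.1.unpair.1 ∧ N ≤ a.unpair.1) ∨ a ∈ Q}
    have hK : EnumRed K (Y s) := by
      refine enumRed_iff.2 (EF.or (EF.prim ?_) (enumRed_iff.1 hQ))
      exact (Primrec.nat_le.comp (Primrec.const s) u11).and (Primrec.nat_le.comp (Primrec.const N) u1)
    have hforce : ∃ L, Consistent L ∧ (∀ a ∈ L, a ∈ K) ∧ ∀ F : ℕ → ℕ, (∀ a ∈ L, a ∈ tgraph F) →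
        (∀ n, ¬ (s ≤ n.unpair.1 ∧ N ≤ n) → F n = p n) →
        tgraph B ≠ enumOp (WeStd s) (oplus (Y 0) (tgraph F)) := by
      by_cases hcase : possible (WeStd s) (Y 0) K ⊆ tgraph B
      · refine ⟨[], by simp [Consistent], by simp, fun F _ hF heq => hB s ?_⟩
        have : tgraph B = possible (WeStd s) (Y 0) K := by
          refine Set.Subset.antisymm (fun b hb => ?_) hcase
          rw [heq] at hb
          obtain ⟨L, h1, h2, h3⟩ := exists_use hb
          refine ⟨L, h1, fun a ha => ?_, h3⟩
          by_cases h4 : s ≤ a.unpair.1.unpair.1 ∧ N ≤ a.unpair.1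
          · exact Or.inl h4
          · exact Or.inr ⟨h4, (hF _ h4).symm.trans (h2 a ha)⟩
        rw [this]
        exact EnumRed.possible (CE_WeStd s) (hY0 s) hK
      · obtain ⟨b, ⟨L, h1, h2, h3⟩, hb⟩ := Set.not_subset.1 hcase
        refine ⟨L, h1, h2, fun F hF _ heq => hb ?_⟩
        rw [heq]
        exact enumOp_mono _ (oplus_mono _ fun a ha => hF a ha) h3
    obtain ⟨L, hL, hLK, hforce⟩ := hforce
    obtain ⟨N₀, hN₀⟩ := exists_bound (fun a => a.unpair.1) L
    obtain ⟨N₁, h1, h2, h3⟩ : ∃ N₁, N ≤ N₁ ∧ s + 1 ≤ N₁ ∧ N₀ ≤ N₁ :=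
      ⟨max N (max (s + 1) N₀), by omega, by omega, by omega⟩
    -- beyond `N₁`, column `s` is filled with `h s`; below `N₁` everything becomes fixed
    let p' : ℕ → ℕ := fun n => if n.unpair.1 = s ∧ N₁ ≤ n then h s n.unpair.2 else upd p L n
    have hp'upd : ∀ n, ¬ (n.unpair.1 = s ∧ N₁ ≤ n) → p' n = upd p L n := fun n hn => if_neg hn
    have hp'h : ∀ n, n.unpair.1 = s → N₁ ≤ n → p' n = h s n.unpair.2 :=
      fun n hn hn' => if_pos ⟨hn, hn'⟩
    have hupd : ∀ n, ¬ (s ≤ n.unpair.1 ∧ N ≤ n) → upd p L n = p n := by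
      intro n hn
      rcases upd_cases (p := p) hL n with h4 | h4
      · rcases hLK _ h4 with h5 | h5
        · simp only [Nat.unpair_pair] at h5
          exact absurd h5 hn
        · exact (pair_mem_tgraph.1 h5.2).symm
      · exact h4
    have hpp : ∀ n, ¬ (s ≤ n.unpair.1 ∧ N ≤ n) → p' n = p n := by
      intro n hn
      rw [hp'upd n (by omega), hupd n hn]
    refine ⟨p', _, ⟨N₁, rfl, ?_⟩, ?_, hpp, ?_, fun F hF => ⟨⟨N₁, fun z hz => ?_⟩, ?_⟩⟩
    · have e1 : E1 (Y (s + 1)) fun a : ℕ => a ∈ (List.range N₁).map fun n => Nat.pair n (p' n) :=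
        EF.prim (primrec_list_mem.comp (Primrec.const _) Primrec.id)
      have e2 : E1 (Y (s + 1)) fun a : ℕ => (N₁ ≤ a.unpair.1 ∧ a.unpair.1.unpair.1 = s) ∧
          Nat.pair a.unpair.1.unpair.2 a.unpair.2 ∈ tgraph (h s) := by
        refine EF.and (EF.prim ?_) ((hh s).e1 (Primrec₂.natPair.comp (u2.comp u1) u2))
        exact (Primrec.nat_le.comp (Primrec.const N₁) u1).and
          (Primrec.eq.comp u11 (Primrec.const s))
      have e3 : E1 (Y (s + 1)) fun a : ℕ => (N₁ ≤ a.unpair.1 ∧ a.unpair.1.unpair.1 < s) ∧ a ∈ Q := by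
        refine EF.and (EF.prim ?_) (enumRed_iff.1 (hQ.trans (hY s)))
        exact (Primrec.nat_le.comp (Primrec.const N₁) u1).and
          (Primrec.nat_lt.comp u11 (Primrec.const s))
      refine enumRed_iff.2 ((e1.or (e2.or e3)).of_iff fun _ a => ?_)
      constructor
      · rintro ⟨ha, hap⟩
        have hap' : p' a.unpair.1 = a.unpair.2 := hap
        by_cases hlt : a.unpair.1 < N₁
        · left
          refine List.mem_map.2 ⟨_, List.mem_range.2 hlt, ?_⟩
          rw [hap', Nat.pair_unpair]
        · right
          rcases lt_trichotomy a.unpair.1.unpair.1 s with h4 | h4 | h4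
          · right
            exact ⟨⟨by omega, h4⟩, by omega, (hpp _ (by omega)).symm.trans hap'⟩
          · left
            refine ⟨⟨by omega, h4⟩, pair_mem_tgraph.2 ?_⟩
            rw [← hap', hp'h _ h4 (by omega)]
          · omega
      · rintro (h4 | ⟨⟨h4, h5⟩, h6⟩ | ⟨⟨h4, h5⟩, h6, h7⟩)
        · obtain ⟨n, hn, rfl⟩ := List.mem_map.1 h4
          have := List.mem_range.1 hn
          refine ⟨?_, pair_mem_tgraph.2 rfl⟩
          simp only [Nat.unpair_pair]
          omega
        · refine ⟨by omega, (hp'h _ h5 h4).trans (pair_mem_tgraph.1 h6)⟩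
        · exact ⟨by omega, (hpp _ h6).trans h7⟩
    · rintro n ⟨h4, h5⟩
      exact ⟨by omega, by omega⟩
    · rintro ⟨_, h5⟩
      omega
    · have hz' : N₁ ≤ Nat.pair s z := hz.trans (Nat.right_le_pair s z)
      rw [hF, hp'h _ (by simp) hz']
      · simp
      · rintro ⟨h4, _⟩
        simp only [Nat.unpair_pair] at h4
        omega
    · refine hforce F (fun a ha => ?_) fun n hn => ?_
      · have := hN₀ a ha
        have h5 : F a.unpair.1 = p' a.unpair.1 := by
          refine hF _ ?_
          rintro ⟨_, h5⟩
          omega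
        exact h5.trans ((hp'upd _ (by omega)).trans (subset_tgraph_upd hL ha))
      · rw [hF, hpp n hn]
        rintro ⟨h4, h5⟩
        exact hn ⟨by omega, by omega⟩
  refine ⟨F, fun s => ?_, ?_⟩
  · obtain ⟨⟨M, hM⟩, _⟩ := hF s
    have e1 : E1 (tgraph F) fun a : ℕ => a ∈ (List.range M).map fun n => Nat.pair n (h s n) :=
      EF.prim (primrec_list_mem.comp (Primrec.const _) Primrec.id)
    have e2 : E1 (tgraph F) fun a : ℕ => M ≤ a.unpair.1 ∧
        Nat.pair (Nat.pair s a.unpair.1) a.unpair.2 ∈ tgraph F :=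
      (EF.prim (Primrec.nat_le.comp (Primrec.const M) u1)).and
        (EF.mem (Primrec₂.natPair.comp (Primrec₂.natPair.comp (Primrec.const s) u1) u2))
    refine enumRed_iff.2 ((e1.or e2).of_iff fun _ a => ?_)
    simp only [pair_mem_tgraph]
    constructor
    · intro ha
      have ha' : h s a.unpair.1 = a.unpair.2 := ha
      by_cases hlt : a.unpair.1 < M
      · left
        refine List.mem_map.2 ⟨_, List.mem_range.2 hlt, ?_⟩
        rw [ha', Nat.pair_unpair]
      · right
        exact ⟨by omega, by rw [hM _ (by omega), ha']⟩
    · rintro (h4 | ⟨h4, h5⟩)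
      · obtain ⟨n, hn, rfl⟩ := List.mem_map.1 h4
        exact pair_mem_tgraph.2 rfl
      · exact (hM _ h4).symm.trans h5
  · rintro ⟨W, hW, heq⟩
    obtain ⟨e, rfl⟩ := hW.exists_index
    exact (hF e).2 heq

/-- The join of two total functions, as a total function. -/
def tjoin (f h : ℕ → ℕ) : ℕ → ℕ := fun n => if n % 2 = 0 then f (n / 2) else h (n / 2)

theorem left_red_tjoin (f h : ℕ → ℕ) : EnumRed (tgraph f) (tgraph (tjoin f h)) := by
  refine enumRed_iff.2 ((EF.mem (f := fun a : ℕ => Nat.pair (2 * a.unpair.1) a.unpair.2)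
    (Primrec₂.natPair.comp (Primrec.nat_double.comp (Primrec.fst.comp Primrec.unpair))
      (Primrec.snd.comp Primrec.unpair))).of_iff fun _ a => ?_)
  rw [pair_mem_tgraph]
  simp [tjoin, tgraph]

theorem right_red_tjoin (f h : ℕ → ℕ) : EnumRed (tgraph h) (tgraph (tjoin f h)) := by
  refine enumRed_iff.2 ((EF.mem (f := fun a : ℕ => Nat.pair (2 * a.unpair.1 + 1) a.unpair.2)
    (Primrec₂.natPair.comp (Primrec.nat_double_succ.comp (Primrec.fst.comp Primrec.unpair))
      (Primrec.snd.comp Primrec.unpair))).of_iff fun _ a => ?_)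
  rw [pair_mem_tgraph, tjoin, if_neg (by omega), show (2 * a.unpair.1 + 1) / 2 = a.unpair.1 by omega]
  rfl

theorem tjoin_red {f h : ℕ → ℕ} {X : Set ℕ} (hf : EnumRed (tgraph f) X)
    (hh : EnumRed (tgraph h) X) : EnumRed (tgraph (tjoin f h)) X := by
  have u1 : Primrec fun a : ℕ => a.unpair.1 := Primrec.fst.comp Primrec.unpair
  have u2 : Primrec fun a : ℕ => a.unpair.2 := Primrec.snd.comp Primrec.unpair
  have d2 : Primrec fun a : ℕ => Nat.pair (a.unpair.1 / 2) a.unpair.2 :=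
    Primrec₂.natPair.comp (Primrec.nat_div.comp u1 (Primrec.const 2)) u2
  have m2 : Primrec fun a : ℕ => a.unpair.1 % 2 := Primrec.nat_mod.comp u1 (Primrec.const 2)
  refine enumRed_iff.2 ((((EF.prim (Primrec.eq.comp m2 (Primrec.const 0))).and (hf.e1 d2)).or
    ((EF.prim (Primrec.eq.comp m2 (Primrec.const 0)).not).and (hh.e1 d2))).of_iff fun _ a => ?_)
  simp only [pair_mem_tgraph]
  show tjoin f h a.unpair.1 = a.unpair.2 ↔ _
  by_cases hc : a.unpair.1 % 2 = 0 <;> simp [tjoin, hc]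

/-- A total `f` above `γ` which does not compute `a 0`, but joins each `a m` above `C`. -/
theorem exists_joining {γ : ℕ → ℕ} {a : ℕ → ℕ → ℕ} (ha : ∀ m, ¬ EnumRed (tgraph (a m)) (tgraph γ))
    (C : Set ℕ) :
    ∃ f : ℕ → ℕ, EnumRed (tgraph γ) (tgraph f) ∧
      (∀ m, EnumRed C (oplus (tgraph f) (tgraph (a m)))) ∧ ¬ EnumRed (tgraph (a 0)) (tgraph f) := by
  have hstep : ∀ (t : ℕ) (G : Set ℕ), (∀ r, ¬ EnumRed (tgraph (a r)) G) →
      ∃ F : ℕ → ℕ, EnumRed C (oplus (tgraph F) (tgraph (a t))) ∧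
        ∀ r, ¬ EnumRed (tgraph (a r)) (oplus G (tgraph F)) :=
    fun t G hG => join_step (hG t) a hG
  choose! H hH1 hH2 using hstep
  let Y : ℕ → Set ℕ := fun t => Nat.rec (tgraph γ) (fun t G => oplus G (tgraph (H t G))) t
  have hY : ∀ t r, ¬ EnumRed (tgraph (a r)) (Y t) := by
    intro t
    induction t with
    | zero => exact ha
    | succ t ih => exact hH2 t (Y t) ih
  obtain ⟨F, hF1, hF2⟩ := upper_bound (Y := Y) (h := fun t => H t (Y t)) (B := a 0)
    (fun s => EnumRed.oplus_left _ _) (fun s => EnumRed.oplus_right _ _) (fun s => hY s 0)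
  refine ⟨tjoin γ F, left_red_tjoin _ _, fun m => (hH1 m (Y m) (hY m)).trans ?_, fun hcon => hF2 ?_⟩
  · exact EnumRed.oplus (((hF1 m).trans (right_red_tjoin γ F)).trans (EnumRed.oplus_left _ _))
      (EnumRed.oplus_right _ _)
  · exact hcon.trans (tjoin_red (EnumRed.oplus_left _ _) (EnumRed.oplus_right _ _))

/-! ### Columns of `g` and the choice of the antichain -/

theorem col_red_restrCols (g : ℕ → ℕ) {I : Set ℕ} {m : ℕ} (hm : m ∈ I) :
    EnumRed (tgraph (col g m)) (tgraph (restrCols g I)) := by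
  refine enumRed_iff.2 ((EF.mem
    (f := fun a : ℕ => Nat.pair (Nat.pair m a.unpair.1) a.unpair.2)
    (Primrec₂.natPair.comp (Primrec₂.natPair.comp (Primrec.const m) (Primrec.fst.comp Primrec.unpair))
      (Primrec.snd.comp Primrec.unpair))).of_iff fun _ a => ?_)
  rw [pair_mem_tgraph]
  simp [restrCols, tgraph, col, hm]

theorem col_red (g : ℕ → ℕ) (m : ℕ) : EnumRed (tgraph (col g m)) (tgraph g) := by
  have h := col_red_restrCols g (Set.mem_univ m)
  have hu : restrCols g Set.univ = g := by
    funext n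
    simp [restrCols]
  rwa [hu] at h

theorem restrCols_red (g : ℕ → ℕ) {I J : Set ℕ} (hIJ : I ⊆ J) {l : List ℕ}
    (hl : ∀ m, m ∈ I ↔ m ∈ l) :
    EnumRed (tgraph (restrCols g I)) (tgraph (restrCols g J)) := by
  have u11 : Primrec fun a : ℕ => a.unpair.1.unpair.1 :=
    Primrec.fst.comp (Primrec.unpair.comp (Primrec.fst.comp Primrec.unpair))
  have hmem : PrimrecPred fun a : ℕ => a.unpair.1.unpair.1 ∈ l :=
    primrec_list_mem.comp (Primrec.const l) u11
  refine enumRed_iff.2 ((((EF.prim hmem).and (EF.mem Primrec.id)).or ((EF.prim hmem.not).and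
    (EF.prim (Primrec.eq.comp (Primrec.const 0) (Primrec.snd.comp Primrec.unpair))))).of_iff
    fun _ a => ?_)
  show restrCols g I a.unpair.1 = a.unpair.2 ↔
    (_ ∧ restrCols g J a.unpair.1 = a.unpair.2) ∨ _
  by_cases h : a.unpair.1.unpair.1 ∈ I
  · have hlm := (hl _).1 h
    simp [restrCols, h, hlm, hIJ h]
  · have hlm : a.unpair.1.unpair.1 ∉ l := fun h' => h ((hl _).2 h')
    simp [restrCols, h, hlm]

/-- The functions of the antichain, chosen one after the other: `f i` computes the columns of `g`
with index in `I i`, joins every other column and every earlier `f j` above `g`, and does not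
compute the column `0`. -/
theorem exists_antichain {g : ℕ → ℕ} (hg : CompIndep g) (k : ℕ) (I : ℕ → Set ℕ)
    (hI : ∀ i m, m ∈ I i → 1 ≤ m ∧ m ≤ k) (N : ℕ) :
    ∃ f : ℕ → ℕ → ℕ, ∀ i < N, EnumRed (tgraph (restrCols g (I i))) (tgraph (f i)) ∧
      (∀ m ∉ I i, EnumRed (tgraph g) (oplus (tgraph (f i)) (tgraph (col g m)))) ∧
      ¬ EnumRed (tgraph (col g 0)) (tgraph (f i)) ∧
      ∀ j < i, EnumRed (tgraph g) (oplus (tgraph (f i)) (tgraph (f j))) := by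
  classical
  induction N with
  | zero => exact ⟨fun _ _ => 0, fun i hi => absurd hi (by omega)⟩
  | succ N ih =>
    obtain ⟨f, hf⟩ := ih
    have h0 : ∀ i, 0 ∉ I i := fun i h => absurd (hI i 0 h).1 (by omega)
    have hk1 : ∀ i, k + 1 ∉ I i := fun i h => absurd (hI i _ h).2 (by omega)
    have hred : ∀ m ∉ I N, EnumRed (tgraph (restrCols g (I N)))
        (tgraph (restrCols g {j | j ≠ m})) := by
      intro m hm
      refine restrCols_red g (l := (List.range (k + 1)).filter (· ∈ I N)) ?_ fun m' => ?_
      · rintro j hj rfl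
        exact hm hj
      · simp only [List.mem_filter, List.mem_range, decide_eq_true_eq]
        refine ⟨fun h => ⟨?_, h⟩, fun h => h.2⟩
        have := (hI N m' h).2
        omega
    have hcol : ∀ m ∉ I N, ¬ EnumRed (tgraph (col g m)) (tgraph (restrCols g (I N))) :=
      fun m hm h => hg m (h.trans (hred m hm))
    -- an earlier `f j` below the columns in `I N` would put all of `g`, and hence column `k + 1`,
    -- below finitely many other columns
    have hfj : ∀ j < N, ¬ EnumRed (tgraph (f j)) (tgraph (restrCols g (I N))) := by
      intro j hj h
      refine hg (k + 1) ((col_red g (k + 1)).trans (((hf j hj).2.1 0 (h0 j)).trans ?_))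
      refine EnumRed.oplus (h.trans (hred _ (hk1 N))) (col_red_restrCols g ?_)
      show 0 ≠ k + 1
      omega
    let a : ℕ → ℕ → ℕ := fun t =>
      if t % 2 = 0 then (if t / 2 ∈ I N then col g 0 else col g (t / 2))
      else (if t / 2 < N then f (t / 2) else col g 0)
    have ha : ∀ t, ¬ EnumRed (tgraph (a t)) (tgraph (restrCols g (I N))) := by
      intro t
      simp only [a]
      split_ifs with h1 h2 h2
      · exact hcol 0 (h0 N)
      · exact hcol _ h2
      · exact hfj _ h2
      · exact hcol 0 (h0 N)
    have ha0 : a 0 = col g 0 := by simp [a]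
    have ham : ∀ m ∉ I N, a (2 * m) = col g m := by
      intro m hm
      simp [a, hm]
    have haj : ∀ j < N, a (2 * j + 1) = f j := by
      intro j hj
      simp only [a]
      rw [if_neg (by omega), show (2 * j + 1) / 2 = j by omega, if_pos hj]
    obtain ⟨F, hF1, hF2, hF3⟩ := exists_joining ha (tgraph g)
    refine ⟨Function.update f N F, fun i hi => ?_⟩
    rcases Nat.lt_succ_iff_lt_or_eq.1 hi with hi | rfl
    · have hne : ∀ j, j < N → Function.update f N F j = f j :=
        fun j hj => Function.update_of_ne (by omega) _ _
      rw [hne i hi]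
      refine ⟨(hf i hi).1, (hf i hi).2.1, (hf i hi).2.2.1, fun j hj => ?_⟩
      rw [hne j (by omega)]
      exact (hf i hi).2.2.2 j hj
    · rw [Function.update_self]
      refine ⟨hF1, fun m hm => ham m hm ▸ hF2 (2 * m), ha0 ▸ hF3, fun j hj => ?_⟩
      rw [Function.update_of_ne (by omega), ← haj j hj]
      exact hF2 _

/-! ### Operators on partial functions -/

theorem pair_mem_pgraph {φ : ℕ →. ℕ} {x y : ℕ} : Nat.pair x y ∈ pgraph φ ↔ y ∈ φ x := by
  simp [pgraph]

theorem pgraph_lift (f : ℕ → ℕ) : pgraph (PFun.lift f) = tgraph f := by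
  ext a
  show a.unpair.2 ∈ Part.some (f a.unpair.1) ↔ f a.unpair.1 = a.unpair.2
  rw [Part.mem_some_iff]
  exact eq_comm

theorem left_red_pfAdd (φ ψ : ℕ →. ℕ) : EnumRed (pgraph φ) (pgraph (pfAdd φ ψ)) := by
  refine enumRed_iff.2 ((EF.mem (f := fun a : ℕ => Nat.pair (2 * a.unpair.1) a.unpair.2)
    (Primrec₂.natPair.comp (Primrec.nat_double.comp (Primrec.fst.comp Primrec.unpair))
      (Primrec.snd.comp Primrec.unpair))).of_iff fun _ a => ?_)
  rw [pair_mem_pgraph]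
  simp [pfAdd, pgraph]

theorem right_red_pfAdd (φ ψ : ℕ →. ℕ) : EnumRed (pgraph ψ) (pgraph (pfAdd φ ψ)) := by
  refine enumRed_iff.2 ((EF.mem (f := fun a : ℕ => Nat.pair (2 * a.unpair.1 + 1) a.unpair.2)
    (Primrec₂.natPair.comp (Primrec.nat_double_succ.comp (Primrec.fst.comp Primrec.unpair))
      (Primrec.snd.comp Primrec.unpair))).of_iff fun _ a => ?_)
  rw [pair_mem_pgraph, pfAdd, if_neg (by omega),
    show (2 * a.unpair.1 + 1) / 2 = a.unpair.1 by omega]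
  rfl

/-- `j⌢ψ ↦ ψ ⊕ (j⌢ψ)` is given by one enumeration operator. -/
theorem exists_operator_dup : ∃ W, CE W ∧ ∀ (j : ℕ) (ψ : ℕ →. ℕ),
    pgraph (pfAdd ψ (pfCons j ψ)) = enumOp W (pgraph (pfCons j ψ)) := by
  have u1 : Primrec fun a : ℕ => a.unpair.1 := Primrec.fst.comp Primrec.unpair
  have u2 : Primrec fun a : ℕ => a.unpair.2 := Primrec.snd.comp Primrec.unpair
  have d2 : Primrec fun a : ℕ => a.unpair.1 / 2 := Primrec.nat_div.comp u1 (Primrec.const 2)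
  have m2 : Primrec fun a : ℕ => a.unpair.1 % 2 := Primrec.nat_mod.comp u1 (Primrec.const 2)
  have m0 : PrimrecPred fun a : ℕ => a.unpair.1 % 2 = 0 := Primrec.eq.comp m2 (Primrec.const 0)
  have h : EF (fun q : ℕ × (ℕ →. ℕ) => pgraph (pfCons q.1 q.2))
      (fun q a => a ∈ pgraph (pfAdd q.2 (pfCons q.1 q.2))) := by
    refine (((EF.prim m0).and (EF.mem (Primrec₂.natPair.comp (Primrec.succ.comp d2) u2))).or
      ((EF.prim m0.not).and (EF.mem (Primrec₂.natPair.comp d2 u2)))).of_iff fun q a => ?_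
    simp only [pair_mem_pgraph]
    show a.unpair.2 ∈ pfAdd q.2 (pfCons q.1 q.2) a.unpair.1 ↔ _
    by_cases hc : a.unpair.1 % 2 = 0 <;> simp [pfAdd, hc, pfCons]
  obtain ⟨W, hW, H⟩ := h.exists_CE
  exact ⟨W, hW, fun j ψ => H (j, ψ)⟩

/-- `φ ⊕ (m⌢θ) ↦ J(m)⌢(φ ⊕ θ)`, with `J(m) = m` for `1 ≤ m ≤ k` and `J(m) = 1` otherwise, is given by
one enumeration operator. -/
theorem exists_operator_shift (k : ℕ) : ∃ W, CE W ∧ ∀ (φ : ℕ →. ℕ) (m : ℕ) (θ : ℕ →. ℕ),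
    pgraph (pfCons (if 1 ≤ m ∧ m ≤ k then m else 1) (pfAdd φ θ)) =
      enumOp W (pgraph (pfAdd φ (pfCons m θ))) := by
  have u1 : Primrec fun a : ℕ => a.unpair.1 := Primrec.fst.comp Primrec.unpair
  have u2 : Primrec fun a : ℕ => a.unpair.2 := Primrec.snd.comp Primrec.unpair
  have s1 : Primrec fun a : ℕ => a.unpair.1 - 1 := Primrec.nat_sub.comp u1 (Primrec.const 1)
  have z0 : PrimrecPred fun a : ℕ => a.unpair.1 = 0 := Primrec.eq.comp u1 (Primrec.const 0)
  have m0 : PrimrecPred fun a : ℕ => (a.unpair.1 - 1) % 2 = 0 :=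
    Primrec.eq.comp (Primrec.nat_mod.comp s1 (Primrec.const 2)) (Primrec.const 0)
  have hJ : Primrec fun c : ℕ × ℕ => if 1 ≤ c.2 ∧ c.2 ≤ k then c.2 else 1 :=
    Primrec.ite ((Primrec.nat_le.comp (Primrec.const 1) Primrec.snd).and
      (Primrec.nat_le.comp Primrec.snd (Primrec.const k))) Primrec.snd (Primrec.const 1)
  let X : (ℕ →. ℕ) × ℕ × (ℕ →. ℕ) → Set ℕ := fun q => pgraph (pfAdd q.1 (pfCons q.2.1 q.2.2))
  have h1 : EF X (fun _ (a : ℕ) => a.unpair.1 = 0) := EF.prim z0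
  have h2 : EF X (fun q (a : ℕ) => ∃ m, Nat.pair 1 m ∈ X q ∧
      a.unpair.2 = if 1 ≤ m ∧ m ≤ k then m else 1) :=
    EF.exNat (p := fun q (c : ℕ × ℕ) => Nat.pair 1 c.2 ∈ X q ∧
        c.1.unpair.2 = if 1 ≤ c.2 ∧ c.2 ≤ k then c.2 else 1)
      ((EF.mem (Primrec₂.natPair.comp (Primrec.const 1) Primrec.snd)).and
        (EF.prim (Primrec.eq.comp (u2.comp Primrec.fst) hJ)))
  have h3 : EF X (fun q (a : ℕ) => (¬ a.unpair.1 = 0 ∧ (a.unpair.1 - 1) % 2 = 0) ∧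
      Nat.pair (a.unpair.1 - 1) a.unpair.2 ∈ X q) :=
    (EF.prim (z0.not.and m0)).and (EF.mem (Primrec₂.natPair.comp s1 u2))
  have h4 : EF X (fun q (a : ℕ) => (¬ a.unpair.1 = 0 ∧ ¬ (a.unpair.1 - 1) % 2 = 0) ∧
      Nat.pair (a.unpair.1 + 1) a.unpair.2 ∈ X q) :=
    (EF.prim (z0.not.and m0.not)).and (EF.mem (Primrec₂.natPair.comp (Primrec.succ.comp u1) u2))
  have h : EF X (fun q a => a ∈ pgraph
      (pfCons (if 1 ≤ q.2.1 ∧ q.2.1 ≤ k then q.2.1 else 1) (pfAdd q.1 q.2.2))) := by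
    refine ((h1.and h2).or (h3.or h4)).of_iff fun q a => ?_
    simp only [X, pair_mem_pgraph]
    show a.unpair.2 ∈ pfCons (if 1 ≤ q.2.1 ∧ q.2.1 ≤ k then q.2.1 else 1) (pfAdd q.1 q.2.2)
      a.unpair.1 ↔ _
    by_cases hz : a.unpair.1 = 0
    · simp [hz, pfCons, pfAdd]
    · by_cases hc : (a.unpair.1 - 1) % 2 = 0
      · simp [hz, hc, pfCons, pfAdd]
      · have e1 : ¬ (a.unpair.1 + 1) % 2 = 0 := by omega
        have e2 : ¬ (a.unpair.1 + 1) / 2 = 0 := by omega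
        have e3 : (a.unpair.1 + 1) / 2 - 1 = (a.unpair.1 - 1) / 2 := by omega
        simp only [pfCons, pfAdd, if_neg hz, if_neg hc, if_neg e1, if_neg e2, e3]
        simp [hz, hc]
  obtain ⟨W, hW, H⟩ := h.exists_CE
  exact ⟨W, hW, fun φ m θ => H (φ, m, θ)⟩

/-- For a computably e-independent total `g`, `n > 0`, and subsets
`x₁,…,x_k ⊆ {1,…,n}`, there are a downwards `≤ₑ`-closed set `𝒜` of partial
functions and total functions `f₁,…,f_n ∈ 𝒜` forming a strong upwards
antichain in `𝒜`, such that
`(𝒜ᶜ ∪ {ψ : ∃ i, fᵢ ≤ₑ ψ}) ⊕ {i⌢φ : g^{[i]} ≤ₑ φ} ≡_D ⋀ⱼ (𝒜ᶜ ∪ {ψ : ∃ i ∈ xⱼ, fᵢ ≤ₑ ψ})`. -/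
theorem antichain_realizing_free_algebra (g : ℕ → ℕ) (hg : CompIndep g)
    (n k : ℕ) (hn : 0 < n) (hk : 0 < k) (x : Fin k → Set (Fin n)) :
    ∃ (𝒜 : Set (ℕ →. ℕ)) (f : Fin n → ℕ → ℕ),
      (∀ φ ψ : ℕ →. ℕ, peRed φ ψ → ψ ∈ 𝒜 → φ ∈ 𝒜) ∧
      (∀ i, PFun.lift (f i) ∈ 𝒜) ∧
      (∀ i j, i ≠ j → pfAdd (PFun.lift (f i)) (PFun.lift (f j)) ∉ 𝒜) ∧
      DEq
        (mpPlus
          (𝒜ᶜ ∪ {ψ | ∃ i : Fin n, peRed (PFun.lift (f i)) ψ})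
          {h | ∃ (i : ℕ) (φ : ℕ →. ℕ), h = pfCons i φ ∧ peRed (PFun.lift (col g i)) φ})
        (bigWedgeU k (fun j => 𝒜ᶜ ∪ {ψ | ∃ i ∈ x j, peRed (PFun.lift (f i)) ψ})) := by
  classical
  -- the columns of `g` to be computed by the `i`-th function
  let I : ℕ → Set ℕ := fun i => {m | ∃ (j : Fin k) (h : i < n), m = j.val + 1 ∧ (⟨i, h⟩ : Fin n) ∈ x j}
  have hI : ∀ i m, m ∈ I i → 1 ≤ m ∧ m ≤ k := by
    rintro i m ⟨j, _, rfl, _⟩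
    have := j.isLt
    omega
  obtain ⟨f, hf⟩ := exists_antichain hg k I hI n
  have hCompl : ∀ ψ : ℕ →. ℕ, ψ ∈ ({ψ | ¬ EnumRed (tgraph g) (pgraph ψ)} : Set (ℕ →. ℕ))ᶜ ↔
      EnumRed (tgraph g) (pgraph ψ) := fun ψ => by
    simp
  have hlift : ∀ (u : ℕ → ℕ) (ψ : ℕ →. ℕ),
      peRed (PFun.lift u) ψ ↔ EnumRed (tgraph u) (pgraph ψ) := fun u ψ => by
    rw [peRed, pgraph_lift]
  refine ⟨{ψ | ¬ EnumRed (tgraph g) (pgraph ψ)}, fun i => f i, fun φ ψ h hψ hφ => hψ (hφ.trans h),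
    fun i h => ?_, fun i j hij => (hCompl _).2 ?_, ?_, ?_⟩
  · rw [pgraph_lift] at h
    exact (hf i i.isLt).2.2.1 ((col_red g 0).trans h)
  · have hi := left_red_pfAdd (PFun.lift (f i)) (PFun.lift (f j))
    have hj := right_red_pfAdd (PFun.lift (f i)) (PFun.lift (f j))
    rw [pgraph_lift] at hi hj
    rcases lt_or_gt_of_ne (fun h => hij (Fin.ext h) : i.val ≠ j.val) with h | h
    · exact ((hf j j.isLt).2.2.2 i h).trans (EnumRed.oplus hj hi)
    · exact ((hf i i.isLt).2.2.2 j h).trans (EnumRed.oplus hi hj)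
  · obtain ⟨W, hW, H⟩ := exists_operator_dup
    refine ⟨W, hW, fun ψ' hψ' => ?_⟩
    obtain ⟨j, ψ, hψ, rfl⟩ := Set.mem_iUnion.1 hψ'
    refine ⟨_, ?_, H (j.val + 1) ψ⟩
    rcases hψ with hψ | ⟨i, hij, hψ⟩
    · refine ⟨ψ, Or.inl hψ, _, ⟨_, ψ, rfl, (hlift _ _).2 ?_⟩, rfl⟩
      exact (col_red g _).trans ((hCompl ψ).1 hψ)
    · refine ⟨ψ, Or.inr ⟨i, hψ⟩, _, ⟨_, ψ, rfl, (hlift _ _).2 ?_⟩, rfl⟩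
      exact (col_red_restrCols g (show j.val + 1 ∈ I i from ⟨j, i.isLt, rfl, hij⟩)).trans
        ((hf i i.isLt).1.trans ((hlift _ _).1 hψ))
  · obtain ⟨W, hW, H⟩ := exists_operator_shift k
    refine ⟨W, hW, ?_⟩
    rintro ψ' ⟨φ, hφ, _, ⟨m, θ, rfl, hθ⟩, rfl⟩
    refine ⟨_, ?_, H φ m θ⟩
    obtain ⟨j, hj, hjm⟩ : ∃ j : Fin k, (if 1 ≤ m ∧ m ≤ k then m else 1) = j.val + 1 ∧
        (1 ≤ m → m ≤ k → m = j.val + 1) := by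
      by_cases hm : 1 ≤ m ∧ m ≤ k
      · exact ⟨⟨m - 1, by omega⟩, by rw [if_pos hm]; simp only; omega, fun _ _ => by simp only; omega⟩
      · exact ⟨⟨0, hk⟩, by rw [if_neg hm], fun h1 h2 => absurd ⟨h1, h2⟩ hm⟩
    rw [hj]
    refine Set.mem_iUnion.2 ⟨j, pfAdd φ θ, ?_, rfl⟩
    have hl := left_red_pfAdd φ θ
    have hr := right_red_pfAdd φ θ
    rcases hφ with hφ | ⟨i, hφ⟩
    · exact Or.inl ((hCompl _).2 (((hCompl φ).1 hφ).trans hl))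
    · have hφ' := ((hlift _ _).1 hφ).trans hl
      by_cases hm : m ∈ I i
      · obtain ⟨h1, h2⟩ := hI _ _ hm
        obtain ⟨j', _, hj', hx⟩ := hm
        have hjj : j' = j := Fin.ext (by have := hjm h1 h2; omega)
        exact Or.inr ⟨i, hjj ▸ hx, (hlift _ _).2 hφ'⟩
      · exact Or.inl ((hCompl _).2 (((hf i i.isLt).2.1 m hm).trans
          (EnumRed.oplus hφ' (((hlift _ _).1 hθ).trans hr))))
end

section
/- Let ⟨U,+,≤⟩ be an upper semilattice with a least element, and let A ⊆ U be a splitting class. Then there exists a p-morphism f from the partial order ⟨A,≤⟩ to the partial order ⟨2^{<ω}, ⪯⟩ of finite binary strings under the prefix ordering. -/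
/-!
Enumerate all pairs `(a n, e n)` of an element of `A` and a bit. At stage `n` the splitting property
yields `c n > a n` in `A` such that every previously mentioned element `b` (some `a m` or `c m` with
`m < n`) that has a common upper bound with `c n` in `A` already satisfies `b ≤ a n`.

Labels are built in stages: `F 0` is constantly the empty string, and `F (n + 1)` agrees with `F n`
except on the cone above `c n`, where it takes the value `F n (a n) ++ [e n]`. The value `F n x`
depends only on which `c i` with `i < n` lie below `x`. If `c n ≤ x`, these are the same indices for
`x` as for `a n`, so `F n x = F n (a n)` (`stageLabel_eq_of_le`). Hence passing to stage `n + 1` only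
extends labels, and every `F n` is monotone (`stageLabel_mono`).

No later `c n` lies below an element that has already been mentioned, so the label of an element is
constant from the stage where it is first mentioned on; the p-morphism is this limit label. The back
condition for one extra bit is witnessed by `c n`, and the general case follows by induction.
-/

/-- A splitting class in an upper semilattice: a nonempty countable downwards
closed set `A` such that for every `a ∈ A` and every finite `B ⊆ {b ∈ A : b ≰ a}`
there is `c ∈ A` with `c > a` and `b ⊔ c ∉ A` for every `b ∈ B`. -/
def SplittingClass {U : Type*} [SemilatticeSup U] (A : Set U) : Prop :=
  A.Nonempty ∧ A.Countable ∧ (∀ y x : U, y ≤ x → x ∈ A → y ∈ A) ∧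
  ∀ a ∈ A, ∀ B : Set U, B.Finite → B ⊆ {b ∈ A | ¬ b ≤ a} →
    ∃ c ∈ A, a < c ∧ ∀ b ∈ B, b ⊔ c ∉ A

section Construction

variable {X : Type*}

/-- The finite set of elements mentioned before stage `n`, where `C` is the function selecting the
splitting element and `a` the sequence of elements to be treated. -/
noncomputable def mentioned (C : X → Set X → X) (a : ℕ → X) : ℕ → Set X
  | 0 => ∅
  | n + 1 => insert (C (a n) (mentioned C a n)) (insert (a n) (mentioned C a n))

theorem mentioned_finite (C : X → Set X → X) (a : ℕ → X) (n : ℕ) : (mentioned C a n).Finite := by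
  induction n with
  | zero => exact Set.finite_empty
  | succ n ih => exact (ih.insert _).insert _

theorem mentioned_mono (C : X → Set X → X) (a : ℕ → X) : Monotone (mentioned C a) :=
  monotone_nat_of_le_succ fun _ _ hx => Or.inr (Or.inr hx)

variable [PartialOrder X]

open Classical in
/-- The labelling `F n`: at each stage the cone above `c n` receives the label of `a n` extended by
the bit `e n`. -/
noncomputable def stageLabel (c a : ℕ → X) (e : ℕ → Bool) : ℕ → X → List Bool
  | 0, _ => []
  | n + 1, x => if c n ≤ x then stageLabel c a e n (a n) ++ [e n] else stageLabel c a e n x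

theorem stageLabel_congr (c a : ℕ → X) (e : ℕ → Bool) (n : ℕ) (x y : X)
    (h : ∀ i < n, c i ≤ x ↔ c i ≤ y) : stageLabel c a e n x = stageLabel c a e n y := by
  induction n with
  | zero => rfl
  | succ n ih =>
    have hn := h n n.lt_succ_self
    have hih := ih fun i hi => h i (hi.trans n.lt_succ_self)
    by_cases hy : c n ≤ y
    · simp [stageLabel, hy, hn.2 hy]
    · simp [stageLabel, hy, mt hn.1 hy, hih]

/-- If the only earlier `c i` compatible with `c n` are those below `a n`, then before stage `n` the
label of every element above `c n` is that of `a n`. -/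
theorem stageLabel_eq_of_le {c a : ℕ → X} (e : ℕ → Bool) (hlt : ∀ n, a n < c n)
    (hsplit : ∀ n, ∀ i < n, ∀ x, c i ≤ x → c n ≤ x → c i ≤ a n) {n : ℕ} {x : X} (hx : c n ≤ x) :
    stageLabel c a e n x = stageLabel c a e n (a n) :=
  stageLabel_congr c a e n x (a n) fun i hi =>
    ⟨fun h => hsplit n i hi x h hx, fun h => h.trans ((hlt n).le.trans hx)⟩

theorem stageLabel_mono {c a : ℕ → X} (e : ℕ → Bool) (hlt : ∀ n, a n < c n)
    (hsplit : ∀ n, ∀ i < n, ∀ x, c i ≤ x → c n ≤ x → c i ≤ a n) (n : ℕ) {x y : X} (hxy : x ≤ y) :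
    stageLabel c a e n x <+: stageLabel c a e n y := by
  induction n with
  | zero => exact List.prefix_rfl
  | succ n ih =>
    by_cases hx : c n ≤ x
    · simp [stageLabel, hx, hx.trans hxy]
    · by_cases hy : c n ≤ y
      · rw [stageLabel_eq_of_le e hlt hsplit hy] at ih
        simpa [stageLabel, hx, hy] using ih.trans (List.prefix_append _ _)
      · simpa [stageLabel, hx, hy] using ih

theorem stageLabel_stable {c a : ℕ → X} (e : ℕ → Bool) {x : X} {m : ℕ}
    (h : ∀ n, m ≤ n → ¬ c n ≤ x) {n : ℕ} (hn : m ≤ n) :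
    stageLabel c a e n x = stageLabel c a e m x := by
  induction n, hn using Nat.le_induction with
  | base => rfl
  | succ n hn ih => simp [stageLabel, h n hn, ih]

/-- The theorem for an abstract countable partial order, with the splitting property phrased through
common upper bounds instead of joins. -/
theorem exists_pmorphism_of_splitting [Countable X] [Nonempty X]
    (hX : ∀ (a : X) (S : Set X), S.Finite →
      ∃ c, a < c ∧ ∀ b ∈ S, ∀ x, b ≤ x → c ≤ x → b ≤ a) :
    ∃ f : X → List Bool, (∀ p q, p ≤ q → f p <+: f q) ∧
      ∀ p s, f p <+: s → ∃ q, p ≤ q ∧ f q = s := by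
  have hX' : ∀ (a : X) (S : Set X), ∃ c, S.Finite →
      a < c ∧ ∀ b ∈ S, ∀ x, b ≤ x → c ≤ x → b ≤ a := by
    intro a S
    by_cases hS : S.Finite
    · obtain ⟨c, hc⟩ := hX a S hS
      exact ⟨c, fun _ => hc⟩
    · exact ⟨a, fun h => absurd h hS⟩
  choose C hC using hX'
  obtain ⟨g, hg⟩ := exists_surjective_nat (X × Bool)
  let a : ℕ → X := fun n => (g n).1
  let e : ℕ → Bool := fun n => (g n).2
  let M := mentioned C a
  let c : ℕ → X := fun n => C (a n) (M n)
  have hlt : ∀ n, a n < c n := fun n => (hC (a n) (M n) (mentioned_finite C a n)).1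
  have hM : ∀ n, ∀ b ∈ M n, ∀ x, b ≤ x → c n ≤ x → b ≤ a n :=
    fun n => (hC (a n) (M n) (mentioned_finite C a n)).2
  have hcM : ∀ n, c n ∈ M (n + 1) := fun n => Or.inl rfl
  have haM : ∀ n, a n ∈ M (n + 1) := fun n => Or.inr (Or.inl rfl)
  have hsplit : ∀ n, ∀ i < n, ∀ x, c i ≤ x → c n ≤ x → c i ≤ a n :=
    fun n i hi => hM n _ (mentioned_mono C a hi (hcM i))
  -- Nothing chosen from stage `m` on lies below an element mentioned before stage `m`.
  have hnot : ∀ m, ∀ b ∈ M m, ∀ n, m ≤ n → ¬ c n ≤ b := fun m b hb n hn h =>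
    absurd (h.trans (hM n b (mentioned_mono C a hn hb) b le_rfl h)) (hlt n).not_ge
  have hmem : ∀ x : X, ∃ m, x ∈ M m := by
    intro x
    obtain ⟨n, hn⟩ := hg (x, false)
    refine ⟨n + 1, ?_⟩
    have : a n = x := by simp [a, hn]
    exact this ▸ haM n
  choose N hN using hmem
  let F := stageLabel c a e
  let f : X → List Bool := fun x => F (N x) x
  have hf : ∀ x m, (∀ n, m ≤ n → ¬ c n ≤ x) → f x = F m x := by
    intro x m hm
    have h1 : F (max m (N x)) x = F m x := stageLabel_stable e hm (le_max_left _ _)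
    have h2 : F (max m (N x)) x = F (N x) x :=
      stageLabel_stable e (hnot _ x (hN x)) (le_max_right _ _)
    exact h2.symm.trans h1
  have hstep : ∀ p b, ∃ q, p ≤ q ∧ f q = f p ++ [b] := by
    intro p b
    obtain ⟨n, hn⟩ := hg (p, b)
    have ha : a n = p := by simp [a, hn]
    have he : e n = b := by simp [e, hn]
    refine ⟨c n, ha ▸ (hlt n).le, ?_⟩
    have h1 : f (c n) = F (n + 1) (c n) := hf _ _ (hnot _ _ (hcM n))
    have h2 : f (a n) = F n (a n) := by
      refine hf _ _ fun k hk => ?_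
      rcases hk.eq_or_lt with rfl | hk
      · exact (hlt n).not_ge
      · exact hnot (n + 1) _ (haM n) k hk
    rw [h1, ← ha, h2, ← he]
    simp [F, stageLabel]
  refine ⟨f, fun p q hpq => ?_, ?_⟩
  · rw [hf p (max (N p) (N q)) fun n hn => hnot _ p (hN p) n ((le_max_left _ _).trans hn),
      hf q (max (N p) (N q)) fun n hn => hnot _ q (hN q) n ((le_max_right _ _).trans hn)]
    exact stageLabel_mono e hlt hsplit _ hpq
  · rintro p _ ⟨t, rfl⟩
    induction t generalizing p with
    | nil => exact ⟨p, le_rfl, by simp⟩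
    | cons b t ih =>
      obtain ⟨q, hpq, hq⟩ := hstep p b
      obtain ⟨r, hqr, hr⟩ := ih q
      exact ⟨r, hpq.trans hqr, by simp [hr, hq]⟩

end Construction

/-- If `A` is a splitting class in an upper semilattice with least element,
then there is a p-morphism from `⟨A, ≤⟩` to the finite binary strings under
the prefix ordering. -/
theorem splitting_class_pmorphism {U : Type*} [SemilatticeSup U] [OrderBot U]
    (A : Set U) (hA : SplittingClass A) :
    ∃ f : {u // u ∈ A} → List Bool,
      (∀ p q : {u // u ∈ A}, p.val ≤ q.val → (f p).IsPrefix (f q)) ∧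
      (∀ p : {u // u ∈ A}, ∀ s : List Bool, (f p).IsPrefix s →
        ∃ q : {u // u ∈ A}, p.val ≤ q.val ∧ f q = s) := by
  obtain ⟨hne, hcount, hdown, hsplit⟩ := hA
  have : Countable {u // u ∈ A} := hcount.to_subtype
  have : Nonempty {u // u ∈ A} := hne.to_subtype
  refine exists_pmorphism_of_splitting (X := {u // u ∈ A}) fun a S hS => ?_
  obtain ⟨c, hcA, hac, hc⟩ := hsplit a.1 a.2 (Subtype.val '' {b ∈ S | ¬ b ≤ a})
    ((hS.subset (Set.sep_subset _ _)).image _) (by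
      rintro _ ⟨b, hb, rfl⟩
      exact ⟨b.2, hb.2⟩)
  refine ⟨⟨c, hcA⟩, hac, fun b hb x hbx hcx => ?_⟩
  by_contra hba
  exact hc b.1 ⟨b, ⟨hb, hba⟩, rfl⟩ (hdown _ x.1 (sup_le hbx hcx) x.2)
end
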